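/- Let E(x) = S(x) − (π²/2)x. Then limsup_{x→∞} E(x)/x^{1/2} = +∞; that is, for every real C there exist arbitrarily large x with E(x) > C·x^{1/2}. -/

import Mathlib

open Real

/-- `r₂(m)`: the number of representations of `m` as a sum of two squares of integers. -/
noncomputable def r2 (m : ℕ) : ℕ :=
  Set.ncard {p : ℤ × ℤ | p.1 ^ 2 + p.2 ^ 2 = (m : ℤ)}

/-- `S(x)`: the number of integer points `(a,b,w)` with `(a²+b²)² + w² < x`. -/
noncomputable def S (x : ℝ) : ℕ :=
  Set.ncard {p : ℤ × ℤ × ℤ |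
    (((p.1 : ℝ) ^ 2 + (p.2.1 : ℝ) ^ 2) ^ 2 + (p.2.2 : ℝ) ^ 2) < x}

/-- `E(x) = S(x) - (π²/2)·x`. -/
noncomputable def E (x : ℝ) : ℝ := (S x : ℝ) - (Real.pi ^ 2 / 2) * x

/-!
Slice the solid `(a² + b²)² + w² < t⁴` by the vertical lines through the lattice points
`v = (a, b)`. Replacing the chord length `2√(t⁴ - |v|⁴)` by `2√2 t √(t² - |v|²)` changes the count
by a sum of values of a convex function of `|v|²`, and convexity bounds that sum by the
corresponding integral, up to `O(t²)`, on the favourable side. It therefore suffices that the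
error `P(t)` of the Riesz mean `∑ √(t² - |v|²)` is not eventually at most `C t`.

Poisson summation for the theta function gives the Laplace transform of `t P(t)` in closed form;
its growth at the points `±2πi|v|` of the imaginary axis is governed by the values `1/|v|²`. If
`P(t) ≤ C t` for all large `t`, then integrating `t (C t - P(t))` against a nonnegative cosine
polynomial yields a linear inequality between these values. The polynomials used are Gaussian
kernels on the set of subset sums of norms `|v|` with `4 ∤ |v|²`, twisted by a sign. All these norms
lie in one nontrivial coset of `ℤ(1 + √2) + 2𝒪`, with `𝒪` the real algebraic integers, and the norms
with `4 ∣ |v|²` lie in the subgroup itself, so the twist separates the two classes. The outcome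
is a bound for `∑ 1/|v|²`, which diverges.
-/

section

open MeasureTheory Set Filter Topology
open scoped ENNReal

/-! ### Lattice points -/

/-- The squared Euclidean norm `|v|²` of a point of `ℤ²`. -/
def normSq (v : ℤ × ℤ) : ℕ := v.1.natAbs ^ 2 + v.2.natAbs ^ 2

lemma cast_normSq (v : ℤ × ℤ) : (normSq v : ℝ) = (v.1 : ℝ) ^ 2 + (v.2 : ℝ) ^ 2 := by
  simp [normSq, Nat.cast_natAbs]

lemma normSq_eq_zero {v : ℤ × ℤ} : normSq v = 0 ↔ v = 0 := by
  simp [normSq, Prod.ext_iff]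

lemma mem_Icc_of_normSq_le {t : ℝ} (ht : 0 ≤ t) {v : ℤ × ℤ} (hv : (normSq v : ℝ) ≤ t ^ 2) :
    v ∈ Finset.Icc (-⌊t⌋) ⌊t⌋ ×ˢ Finset.Icc (-⌊t⌋) ⌊t⌋ := by
  rw [cast_normSq] at hv
  have abs_le_floor {n : ℤ} (hn : (n : ℝ) ^ 2 ≤ t ^ 2) : |n| ≤ ⌊t⌋ :=
    Int.le_floor.2 (by simpa using abs_le_of_sq_le_sq hn ht)
  rw [Finset.mem_product, Finset.mem_Icc, Finset.mem_Icc, ← abs_le, ← abs_le]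
  exact ⟨abs_le_floor (by nlinarith [sq_nonneg (v.2 : ℝ)]),
    abs_le_floor (by nlinarith [sq_nonneg (v.1 : ℝ)])⟩

lemma finite_setOf_normSq_lt (y : ℝ) : {v : ℤ × ℤ | (normSq v : ℝ) < y}.Finite :=
  (Finset.finite_toSet _).subset fun v (hv : (normSq v : ℝ) < y) =>
    mem_Icc_of_normSq_le (sqrt_nonneg y) <| by
      rw [sq_sqrt ((Nat.cast_nonneg _).trans hv.le)]
      exact hv.le

lemma card_le_of_normSq_le {t : ℝ} (ht : 1 ≤ t) {U : Finset (ℤ × ℤ)}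
    (hU : ∀ v ∈ U, (normSq v : ℝ) ≤ t ^ 2) : (U.card : ℝ) ≤ 9 * t ^ 2 := by
  have h := Finset.card_le_card fun v hv => mem_Icc_of_normSq_le (by linarith) (hU v hv)
  have hfloor : 0 ≤ ⌊t⌋ := Int.floor_nonneg.2 (by linarith)
  have hside : (((Finset.Icc (-⌊t⌋) ⌊t⌋).card : ℕ) : ℝ) ≤ 3 * t := by
    have : ((Finset.Icc (-⌊t⌋) ⌊t⌋).card : ℤ) = 2 * ⌊t⌋ + 1 := by
      rw [Int.card_Icc]; omega
    have : (((Finset.Icc (-⌊t⌋) ⌊t⌋).card : ℕ) : ℝ) = 2 * ⌊t⌋ + 1 := by exact_mod_cast this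
    linarith [Int.floor_le t]
  calc (U.card : ℝ) ≤ (Finset.Icc (-⌊t⌋) ⌊t⌋).card * (Finset.Icc (-⌊t⌋) ⌊t⌋).card := by
        rw [Finset.card_product] at h; exact_mod_cast h
    _ ≤ (3 * t) * (3 * t) := by gcongr
    _ = 9 * t ^ 2 := by ring

lemma summable_one_div_one_add_normSq_pow {k : ℕ} (hk : 2 ≤ k) :
    Summable fun v : ℤ × ℤ => 1 / (1 + (normSq v : ℝ)) ^ k := by
  have hint : Summable fun n : ℤ => 1 / (1 + (n : ℝ) ^ 2) := by
    refine .of_norm_bounded_eventually (summable_one_div_int_pow.2 one_lt_two) ?_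
    filter_upwards [eventually_cofinite_ne (0 : ℤ)] with n hn
    rw [norm_of_nonneg (by positivity)]
    gcongr
    linarith
  refine .of_nonneg_of_le (fun v => by positivity) (fun v => ?_)
    (hint.mul_of_nonneg hint (fun n => by positivity) (fun n => by positivity))
  rw [one_div_mul_one_div]
  gcongr
  calc (1 + (v.1 : ℝ) ^ 2) * (1 + (v.2 : ℝ) ^ 2) ≤ (1 + (normSq v : ℝ)) ^ 2 := by
        rw [cast_normSq]
        nlinarith [sq_nonneg (v.1 : ℝ), sq_nonneg (v.2 : ℝ),
          mul_nonneg (sq_nonneg (v.1 : ℝ)) (sq_nonneg (v.2 : ℝ))]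
    _ ≤ (1 + (normSq v : ℝ)) ^ k := pow_le_pow_right₀ (by simp) hk

lemma not_summable_one_div_normSq : ¬ Summable fun v : ℤ × ℤ => 1 / (normSq v : ℝ) := by
  intro h
  let ι : (Σ a : ℕ, Fin (a + 1)) → ℤ × ℤ := fun x => ((x.1 : ℤ) + 1, (x.2.1 : ℤ) + 1)
  have ι_injective : Function.Injective ι := by
    rintro ⟨a, b⟩ ⟨a', b'⟩ h
    simp only [ι, Prod.mk.injEq] at h
    obtain rfl : a = a' := by omega
    obtain rfl : b = b' := by ext; omega
    rfl
  have hrow (a : ℕ) : 1 / 2 * (1 / ((a + 1 : ℕ) : ℝ)) ≤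
      ∑' b : Fin (a + 1), 1 / (normSq (ι ⟨a, b⟩) : ℝ) := by
    have hterm (b : Fin (a + 1)) :
        1 / (2 * ((a : ℝ) + 1) ^ 2) ≤ 1 / (normSq (ι ⟨a, b⟩) : ℝ) := by
      have hb : ((b : ℕ) : ℝ) ≤ a := by exact_mod_cast Nat.le_of_lt_succ b.2
      simp only [ι, cast_normSq, Int.cast_add, Int.cast_natCast, Int.cast_one]
      gcongr
      nlinarith [Nat.cast_nonneg (α := ℝ) (b : ℕ)]
    calc 1 / 2 * (1 / ((a + 1 : ℕ) : ℝ))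
        = ∑ _b : Fin (a + 1), 1 / (2 * ((a : ℝ) + 1) ^ 2) := by
          simp only [Finset.sum_const, Finset.card_univ, Fintype.card_fin, nsmul_eq_mul]
          push_cast
          field_simp
      _ ≤ _ := by
          rw [tsum_fintype]
          exact Finset.sum_le_sum fun b _ => hterm b
  have hharm : Summable fun a : ℕ => 1 / 2 * (1 / ((a + 1 : ℕ) : ℝ)) :=
    (h.comp_injective ι_injective).sigma.of_nonneg_of_le (fun a => by positivity) hrow
  rw [summable_mul_left_iff (by norm_num),
    summable_nat_add_iff (f := fun n : ℕ => 1 / (n : ℝ)) 1] at hharm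
  exact Real.not_summable_one_div_natCast hharm

/-! ### From `S` to a Riesz mean of the circle problem -/

/-- The Riesz mean `∑_{|v| < t} √(t² - |v|²)` of order `1/2` of the lattice points in a disc. -/
noncomputable def rieszSum (t : ℝ) : ℝ := ∑' v : ℤ × ℤ, √(t ^ 2 - normSq v)

/-- The Riesz mean minus its main term `(2π/3)t³`, the volume of a half ball of radius `t`. -/
noncomputable def rieszError (t : ℝ) : ℝ := rieszSum t - 2 * π / 3 * t ^ 3

lemma rieszSum_eq_sum {t : ℝ} {U : Finset (ℤ × ℤ)} (hU : ∀ v ∉ U, t ^ 2 ≤ normSq v) :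
    rieszSum t = ∑ v ∈ U, √(t ^ 2 - normSq v) :=
  tsum_eq_sum fun v hv => sqrt_eq_zero_of_nonpos (by linarith [hU v hv])

/-- The excess of `2√(2y)√(y - m)` over the length `2√(y² - m²)` of the chord of the disc of
radius `y` at height `m`. It is zero for `y ≤ m` because `√` vanishes on negative numbers. -/
noncomputable def edgeDefect (y m : ℝ) : ℝ := 2 * √(y - m) * (√(2 * y) - √(y + m))

lemma edgeDefect_of_le {y m : ℝ} (h : y ≤ m) : edgeDefect y m = 0 := by
  simp [edgeDefect, sqrt_eq_zero_of_nonpos (sub_nonpos.2 h)]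

lemma edgeDefect_eq_sub_sqrt {y m : ℝ} (h : m ≤ y) :
    edgeDefect y m = 2 * √(2 * y) * √(y - m) - 2 * √(y ^ 2 - m ^ 2) := by
  rw [edgeDefect, show y ^ 2 - m ^ 2 = (y - m) * (y + m) by ring, sqrt_mul (sub_nonneg.2 h)]
  ring

lemma edgeDefect_eq_mul_inv {y m : ℝ} (hy : 0 < y) (hm : 0 ≤ m) :
    edgeDefect y m = 2 * √(y - m) ^ 3 * (√(y + m) + √(2 * y))⁻¹ := by
  rcases le_total y m with h | h
  · simp [edgeDefect, sqrt_eq_zero_of_nonpos (sub_nonpos.2 h)]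
  · rw [edgeDefect, eq_mul_inv_iff_mul_eq₀ (by positivity)]
    linear_combination 2 * √(y - m) * (sq_sqrt (show 0 ≤ 2 * y by positivity)
      - sq_sqrt (show 0 ≤ y + m by positivity) - sq_sqrt (sub_nonneg.2 h))

lemma edgeDefect_nonneg {y m : ℝ} (hy : 0 < y) (hm : 0 ≤ m) : 0 ≤ edgeDefect y m := by
  rw [edgeDefect_eq_mul_inv hy hm]
  positivity

lemma continuous_edgeDefect (y : ℝ) : Continuous (edgeDefect y) := by
  unfold edgeDefect
  fun_prop

lemma convexOn_sqrt_sub_pow_three (y : ℝ) : ConvexOn ℝ univ fun m : ℝ => √(y - m) ^ 3 := by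
  have himage : (fun m : ℝ => max (y - m) 0) '' univ = Ici 0 := by
    ext x
    refine ⟨?_, fun hx => ⟨y - x, mem_univ _, by simpa using hx⟩⟩
    rintro ⟨m, -, rfl⟩
    exact le_max_right (y - m) 0
  have hmax : ConvexOn ℝ univ fun m : ℝ => max (y - m) 0 :=
    ((convexOn_const y convex_univ).sub (concaveOn_id convex_univ)).sup
      (convexOn_const 0 convex_univ)
  have hcomp := ConvexOn.comp (g := fun x : ℝ => x ^ (3 / 2 : ℝ))
    (himage ▸ convexOn_rpow (by norm_num)) hmax
    (himage ▸ monotoneOn_rpow_Ici_of_exponent_nonneg (by norm_num))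
  refine hcomp.congr fun m _ => ?_
  simp only [Function.comp_apply]
  rcases le_total (y - m) 0 with h | h
  · simp [max_eq_right h, sqrt_eq_zero_of_nonpos h]
  · rw [max_eq_left h, sqrt_eq_rpow, ← rpow_mul_natCast h]
    norm_num

lemma convexOn_inv_of_concaveOn {V : Type*} [AddCommGroup V] [Module ℝ V] {s : Set V}
    {f : V → ℝ} (hf : ConcaveOn ℝ s f)
    (hpos : ∀ x ∈ s, 0 < f x) : ConvexOn ℝ s fun x => (f x)⁻¹ := by
  refine ⟨hf.1, fun x hx y hy a b ha hb hab => ?_⟩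
  have hinv := (convexOn_zpow (-1)).2 (hpos x hx) (hpos y hy) ha hb hab
  simp only [zpow_neg_one] at hinv
  have hcomb : 0 < a • f x + b • f y :=
    convex_Ioi (0 : ℝ) (hpos x hx) (hpos y hy) ha hb hab
  exact (inv_anti₀ hcomb (hf.2 hx hy ha hb hab)).trans hinv

lemma convexOn_edgeDefect {y : ℝ} (hy : 0 < y) : ConvexOn ℝ (Ici 0) (edgeDefect y) := by
  have hcube : ConvexOn ℝ (Ici 0) fun m : ℝ => 2 * √(y - m) ^ 3 :=
    ((convexOn_sqrt_sub_pow_three y).subset (subset_univ _) (convex_Ici 0)).smul zero_le_two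
  have hshift : ConcaveOn ℝ (Ici 0) fun m : ℝ => √(y + m) :=
    (strictConcaveOn_sqrt.concaveOn.translate_right y).subset
      (fun m (hm : 0 ≤ m) => add_nonneg hy.le hm) (convex_Ici 0)
  have hinv : ConvexOn ℝ (Ici 0) fun m : ℝ => (√(y + m) + √(2 * y))⁻¹ :=
    convexOn_inv_of_concaveOn (hshift.add (concaveOn_const _ (convex_Ici 0)))
      fun m _ => by positivity
  refine (hcube.mul hinv (fun m _ => by positivity) (fun m _ => by positivity) ?_).congr
    fun m hm => (edgeDefect_eq_mul_inv hy hm).symm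
  refine AntitoneOn.monovaryOn (fun a _ b _ hab => ?_) fun a (ha : 0 ≤ a) b _ hab => ?_ <;>
    gcongr

lemma apply_add_apply_le_of_convexOn {f : ℝ → ℝ} (hf : ConvexOn ℝ (Ici 0) f) {a b : ℝ} (ha : 0 ≤ a)
    (hb : 0 ≤ b) : f a + f b ≤ f 0 + f (a + b) := by
  rcases (add_nonneg ha hb).eq_or_lt with h | h
  · obtain ⟨rfl, rfl⟩ := (add_eq_zero_iff_of_nonneg ha hb).1 h.symm
    simp
  have key {c d : ℝ} (hc : 0 ≤ c) (hd : 0 ≤ d) (hcd : c + d = a + b) :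
      f c ≤ d / (a + b) * f 0 + c / (a + b) * f (a + b) := by
    have hconv := hf.2 (mem_Ici.2 le_rfl) (mem_Ici.2 h.le)
      (div_nonneg hd h.le) (div_nonneg hc h.le) (by field_simp; linarith)
    simpa [div_mul_cancel₀ c h.ne'] using hconv
  refine (add_le_add (key ha hb rfl) (key hb ha (add_comm b a))).trans_eq ?_
  field_simp
  ring

lemma edgeDefect_sub_le {y : ℝ} (hy : 0 < y) {m h : ℝ} (hm : 0 ≤ m) (hh : 0 ≤ h) :
    edgeDefect y m - 3 * h ≤ edgeDefect y (m + h) := by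
  have hconv := apply_add_apply_le_of_convexOn (convexOn_edgeDefect hy) hm hh
  have h2 : √2 ≤ 3 / 2 := by rw [sqrt_le_left (by norm_num)]; norm_num
  have hzero : edgeDefect y 0 = 2 * (√2 - 1) * y := by
    rw [edgeDefect_eq_sub_sqrt hy.le, sub_zero, sqrt_mul zero_le_two, zero_pow two_ne_zero,
      sub_zero, sqrt_sq hy.le]
    linear_combination 2 * √2 * sq_sqrt hy.le
  suffices edgeDefect y 0 - edgeDefect y h ≤ 3 * h by linarith
  rcases le_total y h with hyh | hyh
  · rw [edgeDefect_of_le hyh, hzero]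
    nlinarith
  · have hchord : √(y ^ 2 - h ^ 2) ≤ y := sqrt_le_iff.2 ⟨hy.le, by nlinarith⟩
    have hline : √2 * (y - h) ≤ √(2 * y) * √(y - h) := by
      rw [sqrt_mul zero_le_two, mul_assoc, ← sqrt_mul hy.le]
      gcongr
      exact le_sqrt_of_sq_le (by nlinarith)
    rw [edgeDefect_eq_sub_sqrt hyh, hzero]
    nlinarith

lemma integral_sqrt_sq_sub_sq {y : ℝ} (hy : 0 ≤ y) :
    ∫ m in (0 : ℝ)..y, √(y ^ 2 - m ^ 2) = π * y ^ 2 / 4 := by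
  have hunit : ∫ x in (0 : ℝ)..1, √(1 - x ^ 2) = π / 4 := by
    have hint (a b : ℝ) : IntervalIntegrable (fun x : ℝ => √(1 - x ^ 2)) volume a b :=
      Continuous.intervalIntegrable (by fun_prop) _ _
    have hfull := integral_sqrt_one_sub_sq
    rw [← intervalIntegral.integral_add_adjacent_intervals (hint (-1) 0) (hint 0 1)] at hfull
    have heven := intervalIntegral.integral_comp_neg (fun x : ℝ => √(1 - x ^ 2)) (a := 0) (b := 1)
    simp only [neg_sq, neg_zero] at heven
    linarith
  have hscale (x : ℝ) : √(y ^ 2 - (y * x) ^ 2) = y * √(1 - x ^ 2) := by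
    rw [show y ^ 2 - (y * x) ^ 2 = y ^ 2 * (1 - x ^ 2) by ring, sqrt_mul (sq_nonneg y),
      sqrt_sq hy]
  have hsubst := intervalIntegral.mul_integral_comp_mul_left
    (f := fun m : ℝ => √(y ^ 2 - m ^ 2)) (a := 0) (b := 1) y
  simp only [hscale, intervalIntegral.integral_const_mul, hunit, mul_zero, mul_one] at hsubst
  rw [← hsubst]
  ring

lemma integral_edgeDefect {y : ℝ} (hy : 0 < y) :
    ∫ m in Ioi (0 : ℝ), edgeDefect y m = 4 * √2 / 3 * y ^ 2 - π * y ^ 2 / 2 := by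
  have hsupp : ∫ m in Ioi (0 : ℝ), edgeDefect y m = ∫ m in (0 : ℝ)..y, edgeDefect y m := by
    rw [intervalIntegral.integral_of_le hy.le]
    refine setIntegral_eq_of_subset_of_forall_sdiff_eq_zero measurableSet_Ioi Ioc_subset_Ioi_self
      fun m hm => edgeDefect_of_le ?_
    by_contra! h
    exact hm.2 ⟨hm.1, h.le⟩
  have hsqrt : ∫ m in (0 : ℝ)..y, √(y - m) = 2 / 3 * y * √y := by
    rw [intervalIntegral.integral_comp_sub_left (fun x => √x) y]
    simp only [sub_self, sub_zero, sqrt_eq_rpow]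
    rw [integral_rpow (by norm_num), zero_rpow (by norm_num), rpow_add_one hy.ne']
    ring
  calc ∫ m in Ioi (0 : ℝ), edgeDefect y m
      = ∫ m in (0 : ℝ)..y, (2 * √(2 * y) * √(y - m) - 2 * √(y ^ 2 - m ^ 2)) := by
        rw [hsupp]
        refine intervalIntegral.integral_congr fun m hm => edgeDefect_eq_sub_sqrt ?_
        exact (uIcc_of_le hy.le ▸ hm).2
    _ = 2 * √(2 * y) * (2 / 3 * y * √y) - 2 * (π * y ^ 2 / 4) := by
        rw [intervalIntegral.integral_sub (Continuous.intervalIntegrable (by fun_prop) _ _)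
          (Continuous.intervalIntegrable (by fun_prop) _ _), intervalIntegral.integral_const_mul,
          intervalIntegral.integral_const_mul, hsqrt, integral_sqrt_sq_sub_sq hy.le]
    _ = 4 * √2 / 3 * y ^ 2 - π * y ^ 2 / 2 := by
        rw [sqrt_mul zero_le_two]
        linear_combination 4 * √2 / 3 * y * mul_self_sqrt hy.le

lemma integral_comp_sq_add_sq (f : ℝ → ℝ) :
    ∫ u : ℝ × ℝ, f (u.1 ^ 2 + u.2 ^ 2) = π * ∫ m in Ioi (0 : ℝ), f m := by
  have hpolar (p : ℝ × ℝ) :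
      p.1 • f ((polarCoord.symm p).1 ^ 2 + (polarCoord.symm p).2 ^ 2) =
        (p.1 * f (p.1 ^ 2)) * 1 := by
    rw [polarCoord_symm_apply, smul_eq_mul, mul_one]
    congr 2
    linear_combination p.1 ^ 2 * cos_sq_add_sin_sq p.2
  have hradial : ∫ m in Ioi (0 : ℝ), f m = 2 * ∫ r in Ioi (0 : ℝ), r * f (r ^ 2) := by
    rw [← integral_comp_rpow_Ioi_of_pos (g := f) (p := 2) two_pos, ← integral_const_mul]
    norm_num [mul_assoc]
  rw [← integral_comp_polarCoord_symm, polarCoord_target, Measure.volume_eq_prod]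
  simp_rw [hpolar]
  rw [setIntegral_prod_mul (fun r : ℝ => r * f (r ^ 2)) (fun _ => (1 : ℝ)), hradial]
  simp [pi_pos.le]
  ring

/-- The open unit square centred at the origin, a fundamental cell of the lattice `ℤ²`. -/
def unitSquare : Set (ℝ × ℝ) := Ioo (-1 / 2) (1 / 2) ×ˢ Ioo (-1 / 2) (1 / 2)

lemma measurableSet_unitSquare : MeasurableSet unitSquare :=
  measurableSet_Ioo.prod measurableSet_Ioo

lemma volume_unitSquare : volume unitSquare = 1 := by
  norm_num [unitSquare, Measure.volume_eq_prod, Measure.prod_prod, Real.volume_Ioo]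

lemma neg_mem_unitSquare {u : ℝ × ℝ} : -u ∈ unitSquare ↔ u ∈ unitSquare := by
  simp only [unitSquare, mem_prod, mem_Ioo, Prod.fst_neg, Prod.snd_neg]
  constructor <;> rintro ⟨⟨_, _⟩, _, _⟩ <;> refine ⟨⟨?_, ?_⟩, ?_, ?_⟩ <;> linarith

lemma sq_add_sq_le_of_mem_unitSquare {u : ℝ × ℝ} (hu : u ∈ unitSquare) :
    u.1 ^ 2 + u.2 ^ 2 ≤ 1 / 2 := by
  obtain ⟨⟨_, _⟩, _, _⟩ := hu
  nlinarith

lemma eq_of_sub_mem_unitSquare {u : ℝ × ℝ} {v w : ℤ × ℤ}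
    (hv : u - ((v.1 : ℝ), (v.2 : ℝ)) ∈ unitSquare)
    (hw : u - ((w.1 : ℝ), (w.2 : ℝ)) ∈ unitSquare) : v = w := by
  have coord_eq {x : ℝ} {m n : ℤ} (hm : x - m ∈ Ioo (-1 / 2 : ℝ) (1 / 2))
      (hn : x - n ∈ Ioo (-1 / 2 : ℝ) (1 / 2)) : m = n := by
    have h1 : (m : ℝ) < n + 1 := by linarith [hm.1, hn.2]
    have h2 : (n : ℝ) < m + 1 := by linarith [hm.2, hn.1]
    norm_cast at h1 h2
    omega
  exact Prod.ext (coord_eq hv.1 hw.1) (coord_eq hv.2 hw.2)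

lemma sum_setIntegral_unitSquare_le {g : ℝ × ℝ → ℝ} (hg : Integrable g) (hg0 : ∀ u, 0 ≤ g u)
    (U : Finset (ℤ × ℤ)) :
    ∑ v ∈ U, ∫ u in unitSquare, g (((v.1 : ℝ), (v.2 : ℝ)) + u) ≤ ∫ u, g u := by
  let cell (v : ℤ × ℤ) : Set (ℝ × ℝ) := (· - ((v.1 : ℝ), (v.2 : ℝ))) ⁻¹' unitSquare
  have hcell (v : ℤ × ℤ) : MeasurableSet (cell v) :=
    measurableSet_unitSquare.preimage (measurable_sub_const _)
  have htranslate (v : ℤ × ℤ) :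
      ∫ u in unitSquare, g (((v.1 : ℝ), (v.2 : ℝ)) + u) = ∫ u in cell v, g u := by
    have := (measurePreserving_sub_right volume ((v.1 : ℝ), (v.2 : ℝ))).setIntegral_preimage_emb
      (measurableEmbedding_subRight _) (fun u => g (((v.1 : ℝ), (v.2 : ℝ)) + u)) unitSquare
    simpa only [add_sub_cancel] using this.symm
  calc ∑ v ∈ U, ∫ u in unitSquare, g (((v.1 : ℝ), (v.2 : ℝ)) + u)
      = ∫ u in ⋃ v ∈ U, cell v, g u := by
        simp_rw [htranslate]
        exact (integral_biUnion_finset U (fun v _ => hcell v)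
          (fun v _ w _ hvw => disjoint_left.2 fun u hv hw => hvw (eq_of_sub_mem_unitSquare hv hw))
          fun v _ => hg.integrableOn).symm
    _ ≤ ∫ u, g u := setIntegral_le_integral hg (Eventually.of_forall hg0)

lemma apply_normSq_sub_le_setIntegral {f : ℝ → ℝ} {K : ℝ} (hf : ConvexOn ℝ (Ici 0) f)
    (hK : 0 ≤ K) (hlip : ∀ m h, 0 ≤ m → 0 ≤ h → f m - K * h ≤ f (m + h))
    (hint : Integrable fun u : ℝ × ℝ => f (u.1 ^ 2 + u.2 ^ 2)) (v : ℤ × ℤ) :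
    f (normSq v) - K / 2 ≤ ∫ u in unitSquare, f ((v.1 + u.1) ^ 2 + (v.2 + u.2) ^ 2) := by
  let g (u : ℝ × ℝ) : ℝ := f ((v.1 + u.1) ^ 2 + (v.2 + u.2) ^ 2)
  have hg : Integrable g := hint.comp_add_left ((v.1 : ℝ), (v.2 : ℝ))
  have hreflect : ∫ u in unitSquare, g (-u) = ∫ u in unitSquare, g u := by
    have := (Measure.measurePreserving_neg volume).setIntegral_preimage_emb
      (MeasurableEquiv.neg (ℝ × ℝ)).measurableEmbedding g unitSquare
    rwa [show (Neg.neg ⁻¹' unitSquare : Set (ℝ × ℝ)) = unitSquare from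
      ext fun _ => neg_mem_unitSquare] at this
  have hpoint (u : ℝ × ℝ) (hu : u ∈ unitSquare) :
      f (normSq v) - K / 2 ≤ 1 / 2 * g u + 1 / 2 * g (-u) := by
    have hmid := hf.2 (show 0 ≤ (v.1 + u.1) ^ 2 + (v.2 + u.2) ^ 2 by positivity)
      (show 0 ≤ (v.1 + (-u).1) ^ 2 + (v.2 + (-u).2) ^ 2 by positivity)
      (show (0 : ℝ) ≤ 1 / 2 by norm_num) (show (0 : ℝ) ≤ 1 / 2 by norm_num) (by norm_num)
    have hpar : (1 / 2 : ℝ) • ((v.1 + u.1) ^ 2 + (v.2 + u.2) ^ 2) +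
        (1 / 2 : ℝ) • ((v.1 + (-u).1) ^ 2 + (v.2 + (-u).2) ^ 2) =
        (normSq v : ℝ) + (u.1 ^ 2 + u.2 ^ 2) := by
      simp only [cast_normSq, Prod.fst_neg, Prod.snd_neg, smul_eq_mul]
      ring
    rw [hpar] at hmid
    have := hlip (normSq v) _ (Nat.cast_nonneg _) (add_nonneg (sq_nonneg u.1) (sq_nonneg u.2))
    have := mul_le_mul_of_nonneg_left (sq_add_sq_le_of_mem_unitSquare hu) hK
    simp only [smul_eq_mul] at hmid
    linarith
  have hconst : ∫ _u in unitSquare, (f (normSq v) - K / 2) = f (normSq v) - K / 2 := by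
    simp [Measure.real, volume_unitSquare]
  have hmono := setIntegral_mono_on (integrableOn_const (by simp [volume_unitSquare]))
    ((hg.const_mul (1 / 2)).add (hg.comp_neg.const_mul (1 / 2))).integrableOn
    measurableSet_unitSquare hpoint
  rw [hconst, integral_add' (hg.const_mul _).integrableOn (hg.comp_neg.const_mul _).integrableOn,
    integral_const_mul, integral_const_mul, hreflect] at hmono
  linarith

lemma sum_apply_normSq_le {f : ℝ → ℝ} {K : ℝ} (hf : ConvexOn ℝ (Ici 0) f)
    (hK : 0 ≤ K) (hlip : ∀ m h, 0 ≤ m → 0 ≤ h → f m - K * h ≤ f (m + h))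
    (hint : Integrable fun u : ℝ × ℝ => f (u.1 ^ 2 + u.2 ^ 2))
    (hf0 : ∀ m, 0 ≤ m → 0 ≤ f m) (U : Finset (ℤ × ℤ)) :
    ∑ v ∈ U, f (normSq v) ≤ π * (∫ m in Ioi (0 : ℝ), f m) + K / 2 * U.card := by
  rw [← integral_comp_sq_add_sq]
  have hcells := (Finset.sum_le_sum fun v _ =>
      apply_normSq_sub_le_setIntegral hf hK hlip hint v).trans
    (sum_setIntegral_unitSquare_le hint (fun u => hf0 _ (by positivity)) U)
  rw [Finset.sum_sub_distrib, Finset.sum_const, nsmul_eq_mul] at hcells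
  linarith

lemma integrable_edgeDefect_sq_add_sq (y : ℝ) :
    Integrable fun u : ℝ × ℝ => edgeDefect y (u.1 ^ 2 + u.2 ^ 2) := by
  have hcont : Continuous fun u : ℝ × ℝ => edgeDefect y (u.1 ^ 2 + u.2 ^ 2) :=
    (continuous_edgeDefect y).comp (by fun_prop)
  refine hcont.integrable_of_hasCompactSupport
    (.intro (isCompact_Icc (a := (-√y, -√y)) (b := (√y, √y))) fun u hu => edgeDefect_of_le ?_)
  by_contra! h
  have h1 := abs_le.1 (abs_le_sqrt (show u.1 ^ 2 ≤ y by nlinarith [sq_nonneg u.2]))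
  have h2 := abs_le.1 (abs_le_sqrt (show u.2 ^ 2 ≤ y by nlinarith [sq_nonneg u.1]))
  exact hu ⟨⟨h1.1, h2.1⟩, h1.2, h2.2⟩

lemma sum_edgeDefect_le {y : ℝ} (hy : 0 < y) (U : Finset (ℤ × ℤ)) :
    ∑ v ∈ U, edgeDefect y (normSq v) ≤
      π * (4 * √2 / 3 * y ^ 2 - π * y ^ 2 / 2) + 3 / 2 * U.card := by
  rw [← integral_edgeDefect hy]
  exact sum_apply_normSq_le (convexOn_edgeDefect hy) zero_le_three
    (fun _ _ => edgeDefect_sub_le hy) (integrable_edgeDefect_sq_add_sq y)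
    (fun _ => edgeDefect_nonneg hy) U

lemma finite_setOf_sq_sq_add_sq_lt (x : ℝ) :
    {p : ℤ × ℤ × ℤ | ((p.1 : ℝ) ^ 2 + (p.2.1 : ℝ) ^ 2) ^ 2 + (p.2.2 : ℝ) ^ 2 < x}.Finite := by
  refine (((finite_setOf_normSq_lt (x + 1)).prod (finite_setOf_normSq_lt x)).image
    fun q => (q.1.1, q.1.2, q.2.1)).subset ?_
  rintro ⟨a, b, w⟩ hp
  simp only [mem_ofPred_eq] at hp
  refine ⟨((a, b), (w, 0)), ⟨?_, ?_⟩, rfl⟩ <;> rw [mem_ofPred_eq, cast_normSq]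
  · nlinarith [sq_nonneg ((a : ℝ) ^ 2 + (b : ℝ) ^ 2 - 1), sq_nonneg (w : ℝ),
      sq_nonneg (a : ℝ), sq_nonneg (b : ℝ)]
  · push_cast
    nlinarith [sq_nonneg ((a : ℝ) ^ 2 + (b : ℝ) ^ 2)]

lemma two_mul_sub_one_le_card_Ioo (r : ℝ) :
    2 * r - 1 ≤ ((Finset.Ioo (-⌈r⌉) ⌈r⌉).card : ℝ) := by
  have h : (⌈r⌉ - -⌈r⌉ - 1 : ℤ) ≤ ((Finset.Ioo (-⌈r⌉) ⌈r⌉).card : ℤ) := by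
    rw [Int.card_Ioo]
    exact Int.self_le_toNat _
  have h' : (⌈r⌉ - -⌈r⌉ - 1 : ℝ) ≤ ((Finset.Ioo (-⌈r⌉) ⌈r⌉).card : ℝ) := by exact_mod_cast h
  linarith [Int.le_ceil r]

lemma sum_chord_sub_one_le_S {y : ℝ} {U : Finset (ℤ × ℤ)} (hU : ∀ v ∈ U, (normSq v : ℝ) < y) :
    ∑ v ∈ U, (2 * √(y ^ 2 - (normSq v : ℝ) ^ 2) - 1) ≤ S (y ^ 2) := by
  let chord (v : ℤ × ℤ) : Finset ℤ :=
    Finset.Ioo (-⌈√(y ^ 2 - (normSq v : ℝ) ^ 2)⌉) ⌈√(y ^ 2 - (normSq v : ℝ) ^ 2)⌉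
  let ι : (Σ _ : ℤ × ℤ, ℤ) ↪ ℤ × ℤ × ℤ :=
    ⟨fun q => (q.1.1, q.1.2, q.2), by rintro ⟨⟨a, b⟩, w⟩ ⟨⟨a', b'⟩, w'⟩ h; simp_all⟩
  have hsub : (((U.sigma chord).map ι : Finset _) : Set (ℤ × ℤ × ℤ)) ⊆
      {p | ((p.1 : ℝ) ^ 2 + (p.2.1 : ℝ) ^ 2) ^ 2 + (p.2.2 : ℝ) ^ 2 < y ^ 2} := by
    intro p hp
    obtain ⟨⟨v, w⟩, hvw, rfl⟩ := Finset.mem_map.1 (Finset.mem_coe.1 hp)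
    obtain ⟨hv, hw⟩ := Finset.mem_sigma.1 hvw
    obtain ⟨hw_neg, hw_pos⟩ := Finset.mem_Ioo.1 hw
    have hpos : 0 ≤ y ^ 2 - (normSq v : ℝ) ^ 2 := by
      nlinarith [hU v hv, Nat.cast_nonneg (α := ℝ) (normSq v)]
    have hw_pos' := Int.lt_ceil.1 hw_pos
    have hw_neg' := Int.lt_ceil.1 (neg_lt.1 hw_neg)
    push_cast at hw_neg'
    have hsq : (w : ℝ) ^ 2 < y ^ 2 - (normSq v : ℝ) ^ 2 :=
      (sq_lt_sq' (neg_lt.1 hw_neg') hw_pos').trans_eq (sq_sqrt hpos)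
    rw [cast_normSq] at hsq
    exact lt_sub_iff_add_lt'.1 hsq
  calc ∑ v ∈ U, (2 * √(y ^ 2 - (normSq v : ℝ) ^ 2) - 1)
      ≤ ∑ v ∈ U, ((chord v).card : ℝ) :=
        Finset.sum_le_sum fun v _ => two_mul_sub_one_le_card_Ioo _
    _ = (((U.sigma chord).map ι).card : ℝ) := by
        rw [Finset.card_map, Finset.card_sigma, Nat.cast_sum]
    _ ≤ S (y ^ 2) := by
        rw [← Set.ncard_coe_finset]
        exact Nat.cast_le.2 (ncard_le_ncard hsub (finite_setOf_sq_sq_add_sq_lt _))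

lemma rieszError_sub_le_E {t : ℝ} (ht : 1 ≤ t) :
    2 * √2 * t * rieszError t - 23 * t ^ 2 ≤ E (t ^ 4) := by
  set U := (finite_setOf_normSq_lt (t ^ 2)).toFinset with hU_def
  have hU (v : ℤ × ℤ) : v ∈ U ↔ (normSq v : ℝ) < t ^ 2 := by simp [hU_def]
  have hchord (v : ℤ × ℤ) (hv : v ∈ U) : 2 * √((t ^ 2) ^ 2 - (normSq v : ℝ) ^ 2) =
      2 * √2 * t * √(t ^ 2 - normSq v) - edgeDefect (t ^ 2) (normSq v) := by
    rw [edgeDefect_eq_sub_sqrt ((hU v).1 hv).le, sqrt_mul zero_le_two, sqrt_sq (by linarith)]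
    ring
  have hS := sum_chord_sub_one_le_S fun v hv => (hU v).1 hv
  rw [Finset.sum_sub_distrib, Finset.sum_congr rfl hchord, Finset.sum_sub_distrib,
    ← Finset.mul_sum, ← rieszSum_eq_sum fun v hv => not_lt.1 (mt (hU v).2 hv), Finset.sum_const,
    nsmul_eq_mul, mul_one, ← pow_mul] at hS
  have hdefect := sum_edgeDefect_le (show 0 < t ^ 2 by positivity) U
  have hcard := card_le_of_normSq_le ht fun v hv => ((hU v).1 hv).le
  simp only [E, rieszError]
  nlinarith

/-! ### The Laplace transform of the Riesz mean -/

section CauchySchlomilch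

variable {a b : ℝ}

lemma image_mul_sub_div_Ioi (ha : 0 < a) (hb : 0 < b) :
    (fun s : ℝ => a * s - b / s) '' Ioi 0 = univ := by
  refine eq_univ_iff_forall.2 fun x => ?_
  set D := √(x ^ 2 + 4 * a * b)
  have hD_sq : D ^ 2 = x ^ 2 + 4 * a * b := sq_sqrt (by positivity)
  have hD : |x| < D := by
    rw [← sqrt_sq_eq_abs]
    exact sqrt_lt_sqrt (sq_nonneg _) (by linarith [mul_pos ha hb])
  have hpos : 0 < x + D := by linarith [neg_abs_le x]
  refine ⟨(x + D) / (2 * a), div_pos hpos (by positivity), ?_⟩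
  field_simp
  linarith

lemma injOn_mul_sub_div (ha : 0 < a) (hb : 0 < b) :
    InjOn (fun s : ℝ => a * s - b / s) (Ioi 0) :=
  StrictMonoOn.injOn fun _ hs _ _ hst =>
    sub_lt_sub (mul_lt_mul_of_pos_left hst ha) (div_lt_div_of_pos_left hb hs hst)

lemma lintegral_deriv_mul_comp_mul_sub_div (ha : 0 < a) (hb : 0 < b) (g : ℝ → ℝ≥0∞) :
    ∫⁻ s in Ioi (0 : ℝ), ENNReal.ofReal (a + b / s ^ 2) * g (a * s - b / s) = ∫⁻ x, g x := by
  have hderiv (s : ℝ) (hs : s ∈ Ioi (0 : ℝ)) :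
      HasDerivWithinAt (fun s => a * s - b / s) (a + b / s ^ 2) (Ioi 0) s := by
    have h := ((hasDerivAt_id' s).const_mul a).sub ((hasDerivAt_inv (ne_of_gt hs)).const_mul b)
    exact (h.congr_deriv (by ring)).hasDerivWithinAt
  rw [← setLIntegral_univ g, ← image_mul_sub_div_Ioi ha hb,
    lintegral_image_eq_lintegral_abs_deriv_mul measurableSet_Ioi hderiv (injOn_mul_sub_div ha hb)]
  exact setLIntegral_congr_fun measurableSet_Ioi fun s _ => by
    simp only [abs_of_pos (show 0 < a + b / s ^ 2 by positivity)]

lemma lintegral_div_sq_mul_comp_mul_sub_div (ha : 0 < a) (hb : 0 < b) {g : ℝ → ℝ≥0∞}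
    (hg : ∀ x, g (-x) = g x) :
    ∫⁻ s in Ioi (0 : ℝ), ENNReal.ofReal (b / s ^ 2) * g (a * s - b / s) =
      ∫⁻ s in Ioi (0 : ℝ), ENNReal.ofReal a * g (a * s - b / s) := by
  have himage : (fun s : ℝ => b / (a * s)) '' Ioi 0 = Ioi 0 := by
    ext x
    refine ⟨?_, fun (hx : 0 < x) => ⟨b / (a * x), mem_Ioi.2 (by positivity), by field_simp⟩⟩
    rintro ⟨s, hs : 0 < s, rfl⟩
    exact mem_Ioi.2 (by positivity)
  have hinj : InjOn (fun s : ℝ => b / (a * s)) (Ioi 0) := by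
    intro s (hs : 0 < s) t (ht : 0 < t) hst
    field_simp at hst
    exact hst.symm
  have hderiv (s : ℝ) (hs : s ∈ Ioi (0 : ℝ)) :
      HasDerivWithinAt (fun s => b / (a * s)) (-(b / (a * s ^ 2))) (Ioi 0) s := by
    have h := (hasDerivAt_inv (ne_of_gt hs)).const_mul (b / a)
    refine (h.congr_deriv (by field_simp)).hasDerivWithinAt.congr (fun x _ => by field_simp) ?_
    field_simp
  nth_rw 2 [← himage]
  rw [lintegral_image_eq_lintegral_abs_deriv_mul measurableSet_Ioi hderiv hinj]
  refine setLIntegral_congr_fun measurableSet_Ioi fun s (hs : 0 < s) => ?_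
  have hflip : a * (b / (a * s)) - b / (b / (a * s)) = -(a * s - b / s) := by field_simp; ring
  rw [hflip, hg, abs_neg, abs_of_pos (by positivity), ← mul_assoc,
    ← ENNReal.ofReal_mul (by positivity)]
  congr 2
  field_simp

-- The two substitutions `x = a s - b / s` and `s ↦ b / (a s)`, the latter preserving `x²`.
lemma lintegral_comp_mul_sub_div (ha : 0 < a) (hb : 0 < b) {g : ℝ → ℝ≥0∞} (hgm : Measurable g)
    (hg : ∀ x, g (-x) = g x) :
    ENNReal.ofReal (2 * a) * ∫⁻ s in Ioi (0 : ℝ), g (a * s - b / s) = ∫⁻ x, g x := by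
  have hmeas : Measurable fun s : ℝ => g (a * s - b / s) := hgm.comp (by fun_prop)
  rw [← lintegral_deriv_mul_comp_mul_sub_div ha hb, two_mul, ENNReal.ofReal_add ha.le ha.le,
    add_mul, ← lintegral_const_mul _ hmeas]
  nth_rw 2 [← lintegral_div_sq_mul_comp_mul_sub_div ha hb hg]
  rw [← lintegral_add_left (by fun_prop)]
  refine setLIntegral_congr_fun measurableSet_Ioi fun s _ => ?_
  rw [← add_mul, ← ENNReal.ofReal_add ha.le (by positivity)]

end CauchySchlomilch

lemma ofReal_exp_neg_mul_eq_lintegral {a t : ℝ} (ha : 0 < a) (ht : 0 < t) :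
    ENNReal.ofReal (exp (-a * t)) = ENNReal.ofReal (2 * a / √π) *
      ∫⁻ s in Ioi (0 : ℝ), ENNReal.ofReal (exp (-(a ^ 2 * s ^ 2) - t ^ 2 / (4 * s ^ 2))) := by
  have hgauss : ∫⁻ x : ℝ, ENNReal.ofReal (exp (-x ^ 2)) = ENNReal.ofReal √π := by
    have h := integral_gaussian 1
    have hi := integrable_exp_neg_mul_sq one_pos
    simp only [neg_mul, one_mul, div_one] at h hi
    rw [← h, ofReal_integral_eq_lintegral_ofReal hi (Eventually.of_forall fun x => by positivity)]
  have hcs := lintegral_comp_mul_sub_div (g := fun x => ENNReal.ofReal (exp (-x ^ 2))) ha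
    (half_pos ht) (by fun_prop) (fun x => by rw [neg_sq])
  have hsquare : ∫⁻ s in Ioi (0 : ℝ), ENNReal.ofReal (exp (-(a ^ 2 * s ^ 2) - t ^ 2 / (4 * s ^ 2)))
      = ENNReal.ofReal (exp (-a * t)) *
        ∫⁻ s in Ioi (0 : ℝ), ENNReal.ofReal (exp (-(a * s - t / 2 / s) ^ 2)) := by
    rw [← lintegral_const_mul _ (by fun_prop)]
    refine setLIntegral_congr_fun measurableSet_Ioi fun s (hs : 0 < s) => ?_
    rw [← ENNReal.ofReal_mul (exp_pos _).le, ← exp_add]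
    congr 2
    field_simp
    ring
  rw [hsquare, mul_left_comm, div_eq_mul_inv, mul_comm (2 * a), ENNReal.ofReal_mul (by positivity),
    mul_assoc, hcs, hgauss, ← ENNReal.ofReal_mul (by positivity),
    inv_mul_cancel₀ (by positivity), ENNReal.ofReal_one, mul_one]

lemma lintegral_pow_mul_exp_neg_mul_sq {b : ℝ} (hb : 0 < b) (k : ℕ) :
    ∫⁻ x in Ioi (0 : ℝ), ENNReal.ofReal (x ^ k * exp (-b * x ^ 2)) =
      ENNReal.ofReal (b ^ (-((k : ℝ) + 1) / 2) * (1 / 2) * Real.Gamma (((k : ℝ) + 1) / 2)) := by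
  have hk : (-1 : ℝ) < k := neg_one_lt_zero.trans_le k.cast_nonneg
  rw [← integral_rpow_mul_exp_neg_mul_rpow two_pos hk hb]
  have hi := integrableOn_rpow_mul_exp_neg_mul_sq hb hk
  simp only [rpow_natCast, rpow_two] at hi ⊢
  rw [ofReal_integral_eq_lintegral_ofReal hi]
  filter_upwards [ae_restrict_mem measurableSet_Ioi] with x (hx : 0 < x)
  positivity

lemma lintegral_sq_mul_exp_neg_sq_div {s : ℝ} (hs : 0 < s) :
    ∫⁻ x in Ioi (0 : ℝ), ENNReal.ofReal (x ^ 2 * exp (-x ^ 2 / (4 * s ^ 2))) =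
      ENNReal.ofReal (2 * √π * s ^ 3) := by
  have h := lintegral_pow_mul_exp_neg_mul_sq (b := 1 / (4 * s ^ 2)) (by positivity) 2
  have hGamma : Real.Gamma (3 / 2) = √π / 2 := by
    rw [show (3 / 2 : ℝ) = 1 / 2 + 1 by norm_num, Real.Gamma_add_one (by norm_num),
      Real.Gamma_one_half_eq]
    ring
  have hpow : (1 / (4 * s ^ 2)) ^ (-(3 : ℝ) / 2) = 8 * s ^ 3 := by
    have : 1 / (4 * s ^ 2) = (2 * s) ^ (-2 : ℝ) := by
      rw [rpow_neg (by positivity), rpow_two, one_div]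
      ring
    rw [this, ← rpow_mul (by positivity), show (-2 * (-3 / 2) : ℝ) = (3 : ℕ) by norm_num,
      rpow_natCast]
    ring
  push_cast at h
  rw [show (2 : ℝ) + 1 = 3 by norm_num, hGamma, hpow] at h
  convert h using 2
  · ext x
    ring_nf
  · ring_nf

lemma lintegral_pow_five_mul_exp_neg_mul_sq {c : ℝ} (hc : 0 < c) :
    ∫⁻ x in Ioi (0 : ℝ), ENNReal.ofReal (x ^ 5 * exp (-c * x ^ 2)) =
      ENNReal.ofReal (1 / c ^ 3) := by
  rw [lintegral_pow_mul_exp_neg_mul_sq hc 5]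
  push_cast
  rw [show ((5 : ℝ) + 1) / 2 = 2 + 1 by norm_num, show -((5 : ℝ) + 1) / 2 = -(3 : ℕ) by norm_num,
    rpow_neg hc.le, rpow_natCast, Real.Gamma_add_one two_ne_zero, Real.Gamma_two]
  ring_nf

lemma setLIntegral_comp_sqrt_sq_sub {n : ℝ} (hn : 0 ≤ n) (h : ℝ → ℝ≥0∞) :
    ∫⁻ t in Ioi √n, ENNReal.ofReal t * h √(t ^ 2 - n) =
      ∫⁻ x in Ioi (0 : ℝ), ENNReal.ofReal x * h x := by
  have himage : (fun x : ℝ => √(x ^ 2 + n)) '' Ioi 0 = Ioi √n := by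
    ext t
    constructor
    · rintro ⟨x, hx : 0 < x, rfl⟩
      exact sqrt_lt_sqrt hn (by nlinarith)
    · intro (ht : √n < t)
      have ht0 : 0 < t := (sqrt_nonneg n).trans_lt ht
      have hnt : n < t ^ 2 := (sqrt_lt' ht0).1 ht
      refine ⟨√(t ^ 2 - n), sqrt_pos.2 (by linarith), ?_⟩
      dsimp only
      rw [sq_sqrt (by linarith), sub_add_cancel, sqrt_sq ht0.le]
  have hinj : InjOn (fun x : ℝ => √(x ^ 2 + n)) (Ioi 0) :=
    StrictMonoOn.injOn fun x (hx : 0 < x) y _ hxy => sqrt_lt_sqrt (by positivity) (by nlinarith)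
  have hderiv (x : ℝ) (hx : x ∈ Ioi (0 : ℝ)) :
      HasDerivWithinAt (fun x => √(x ^ 2 + n)) (x / √(x ^ 2 + n)) (Ioi 0) x := by
    have hx : 0 < x := hx
    have := ((hasDerivAt_pow 2 x).add_const n).sqrt (by positivity)
    refine (this.congr_deriv ?_).hasDerivWithinAt
    push_cast
    field_simp
  rw [← himage, lintegral_image_eq_lintegral_abs_deriv_mul measurableSet_Ioi hderiv hinj]
  refine setLIntegral_congr_fun measurableSet_Ioi fun x (hx : 0 < x) => ?_
  rw [← mul_assoc, ← ENNReal.ofReal_mul (abs_nonneg _), abs_of_pos (by positivity),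
    sq_sqrt (by positivity), add_sub_cancel_right, sqrt_sq hx.le,
    div_mul_cancel₀ _ (by positivity)]

lemma lintegral_mul_sqrt_mul_exp_neg_sq_div {n s : ℝ} (hn : 0 ≤ n) (hs : 0 < s) :
    ∫⁻ t in Ioi (0 : ℝ), ENNReal.ofReal (t * √(t ^ 2 - n) * exp (-t ^ 2 / (4 * s ^ 2))) =
      ENNReal.ofReal (2 * √π * s ^ 3 * exp (-n / (4 * s ^ 2))) := by
  have hsupp : ∫⁻ t in Ioi (0 : ℝ), ENNReal.ofReal (t * √(t ^ 2 - n) * exp (-t ^ 2 / (4 * s ^ 2))) =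
      ∫⁻ t in Ioi √n, ENNReal.ofReal (t * √(t ^ 2 - n) * exp (-t ^ 2 / (4 * s ^ 2))) := by
    rw [← inter_eq_left.2 (Ioi_subset_Ioi (sqrt_nonneg n)),
      ← setLIntegral_indicator measurableSet_Ioi]
    refine setLIntegral_congr_fun measurableSet_Ioi fun t (ht : 0 < t) => ?_
    by_cases h : t ∈ Ioi √n
    · rw [indicator_of_mem h]
    · have : t ^ 2 ≤ n := (le_sqrt' ht).1 (not_lt.1 h)
      simp [h, sqrt_eq_zero_of_nonpos (sub_nonpos.2 this)]
  calc ∫⁻ t in Ioi (0 : ℝ), ENNReal.ofReal (t * √(t ^ 2 - n) * exp (-t ^ 2 / (4 * s ^ 2)))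
      = ∫⁻ t in Ioi √n, ENNReal.ofReal t *
          ENNReal.ofReal (√(t ^ 2 - n) * exp (-(√(t ^ 2 - n) ^ 2 + n) / (4 * s ^ 2))) := by
        rw [hsupp]
        refine setLIntegral_congr_fun measurableSet_Ioi fun t (ht : √n < t) => ?_
        have ht0 : 0 < t := (sqrt_nonneg n).trans_lt ht
        have hnt : n < t ^ 2 := (sqrt_lt' ht0).1 ht
        rw [sq_sqrt (by linarith), sub_add_cancel, ← ENNReal.ofReal_mul ht0.le, mul_assoc]
    _ = ENNReal.ofReal (exp (-n / (4 * s ^ 2))) *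
          ∫⁻ x in Ioi (0 : ℝ), ENNReal.ofReal (x ^ 2 * exp (-x ^ 2 / (4 * s ^ 2))) := by
        rw [setLIntegral_comp_sqrt_sq_sub hn fun x =>
          ENNReal.ofReal (x * exp (-(x ^ 2 + n) / (4 * s ^ 2))),
          ← lintegral_const_mul _ (by fun_prop)]
        refine setLIntegral_congr_fun measurableSet_Ioi fun x (hx : 0 < x) => ?_
        rw [← ENNReal.ofReal_mul hx.le, ← ENNReal.ofReal_mul (by positivity),
          show -(x ^ 2 + n) / (4 * s ^ 2) = -x ^ 2 / (4 * s ^ 2) + -n / (4 * s ^ 2) by ring,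
          exp_add]
        ring_nf
    _ = ENNReal.ofReal (2 * √π * s ^ 3 * exp (-n / (4 * s ^ 2))) := by
        rw [lintegral_sq_mul_exp_neg_sq_div hs, ← ENNReal.ofReal_mul (by positivity), mul_comm]

-- Subordination and Tonelli reduce the Laplace transform to the Gaussian case.
lemma lintegral_mul_sqrt_mul_exp_neg_mul {n a : ℝ} (hn : 0 ≤ n) (ha : 0 < a) :
    ∫⁻ t in Ioi (0 : ℝ), ENNReal.ofReal (t * √(t ^ 2 - n) * exp (-a * t)) =
      ∫⁻ s in Ioi (0 : ℝ), ENNReal.ofReal (4 * a * s ^ 3 * exp (-(a ^ 2 * s ^ 2))) *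
        ENNReal.ofReal (exp (-n / (4 * s ^ 2))) := by
  calc ∫⁻ t in Ioi (0 : ℝ), ENNReal.ofReal (t * √(t ^ 2 - n) * exp (-a * t))
      = ∫⁻ t in Ioi (0 : ℝ), ∫⁻ s in Ioi (0 : ℝ),
          ENNReal.ofReal (2 * a / √π * exp (-(a ^ 2 * s ^ 2))) *
            ENNReal.ofReal (t * √(t ^ 2 - n) * exp (-t ^ 2 / (4 * s ^ 2))) := by
        refine setLIntegral_congr_fun measurableSet_Ioi fun t (ht : 0 < t) => ?_
        rw [ENNReal.ofReal_mul (by positivity), ofReal_exp_neg_mul_eq_lintegral ha ht,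
          ← lintegral_const_mul _ (by fun_prop), ← lintegral_const_mul _ (by fun_prop)]
        refine lintegral_congr fun s => ?_
        repeat rw [← ENNReal.ofReal_mul (by positivity)]
        rw [show -(a ^ 2 * s ^ 2) - t ^ 2 / (4 * s ^ 2) =
            -(a ^ 2 * s ^ 2) + -t ^ 2 / (4 * s ^ 2) by ring,
          exp_add]
        ring_nf
    _ = ∫⁻ s in Ioi (0 : ℝ), ENNReal.ofReal (2 * a / √π * exp (-(a ^ 2 * s ^ 2))) *
          ∫⁻ t in Ioi (0 : ℝ), ENNReal.ofReal (t * √(t ^ 2 - n) * exp (-t ^ 2 / (4 * s ^ 2))) := by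
        rw [lintegral_lintegral_swap (by fun_prop)]
        exact lintegral_congr fun s => lintegral_const_mul _ (by fun_prop)
    _ = _ := by
        refine setLIntegral_congr_fun measurableSet_Ioi fun s (hs : 0 < s) => ?_
        rw [lintegral_mul_sqrt_mul_exp_neg_sq_div hn hs, ← ENNReal.ofReal_mul (by positivity),
          ← ENNReal.ofReal_mul (by positivity)]
        field_simp
        ring_nf

lemma summable_exp_neg_mul_int_sq {c : ℝ} (hc : 0 < c) :
    Summable fun n : ℤ => exp (-c * (n : ℝ) ^ 2) := by
  refine (summable_pow_mul_jacobiTheta₂_term_bound 0 (T := c / π) (by positivity) 0).congr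
    fun n => ?_
  simp only [pow_zero, one_mul, mul_zero, zero_mul, sub_zero]
  field_simp

lemma tsum_ofReal_exp_neg_mul_normSq {c : ℝ} (hc : 0 < c) :
    ∑' v : ℤ × ℤ, ENNReal.ofReal (exp (-c * normSq v)) =
      ENNReal.ofReal ((∑' n : ℤ, exp (-c * (n : ℝ) ^ 2)) ^ 2) := by
  rw [sq, ENNReal.ofReal_mul (tsum_nonneg fun _ => (exp_pos _).le),
    ENNReal.ofReal_tsum_of_nonneg (fun _ => (exp_pos _).le) (summable_exp_neg_mul_int_sq hc),
    ENNReal.tsum_prod', ← ENNReal.tsum_mul_right]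
  refine tsum_congr fun m => ?_
  rw [← ENNReal.tsum_mul_left]
  refine tsum_congr fun n => ?_
  rw [← ENNReal.ofReal_mul (exp_pos _).le, ← exp_add, cast_normSq]
  ring_nf

lemma tsum_ofReal_exp_neg_normSq_div {s : ℝ} (hs : 0 < s) :
    ∑' v : ℤ × ℤ, ENNReal.ofReal (exp (-normSq v / (4 * s ^ 2))) =
      ENNReal.ofReal (4 * π * s ^ 2) *
        ∑' v : ℤ × ℤ, ENNReal.ofReal (exp (-(4 * π ^ 2 * s ^ 2) * normSq v)) := by
  have hpoisson := Real.tsum_exp_neg_mul_int_sq (a := 4 * π * s ^ 2) (by positivity)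
  have hdual (n : ℤ) : -π * (4 * π * s ^ 2) * (n : ℝ) ^ 2 = -(4 * π ^ 2 * s ^ 2) * (n : ℝ) ^ 2 := by
    ring
  have hprimal (n : ℤ) : -π / (4 * π * s ^ 2) * (n : ℝ) ^ 2 = -(1 / (4 * s ^ 2)) * (n : ℝ) ^ 2 := by
    field_simp
  simp only [hdual, hprimal] at hpoisson
  have hdiv (v : ℤ × ℤ) : -(normSq v : ℝ) / (4 * s ^ 2) = -(1 / (4 * s ^ 2)) * normSq v := by ring
  simp only [hdiv]
  rw [tsum_ofReal_exp_neg_mul_normSq (by positivity),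
    tsum_ofReal_exp_neg_mul_normSq (by positivity),
    ← ENNReal.ofReal_mul (by positivity), hpoisson, mul_pow, div_pow, ← sqrt_eq_rpow,
    sq_sqrt (by positivity)]
  field_simp

lemma tsum_lintegral_mul_sqrt_mul_exp_neg_mul {a : ℝ} (ha : 0 < a) :
    ∑' v : ℤ × ℤ, ∫⁻ t in Ioi (0 : ℝ), ENNReal.ofReal (t * √(t ^ 2 - normSq v) * exp (-a * t)) =
      ∑' v : ℤ × ℤ, ENNReal.ofReal (16 * π * a / (a ^ 2 + 4 * π ^ 2 * normSq v) ^ 3) := by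
  have hmoment (v : ℤ × ℤ) : ENNReal.ofReal (16 * π * a / (a ^ 2 + 4 * π ^ 2 * normSq v) ^ 3) =
      ∫⁻ s in Ioi (0 : ℝ), ENNReal.ofReal (16 * π * a) *
        ENNReal.ofReal (s ^ 5 * exp (-(a ^ 2 + 4 * π ^ 2 * normSq v) * s ^ 2)) := by
    rw [lintegral_const_mul _ (by fun_prop), lintegral_pow_five_mul_exp_neg_mul_sq (by positivity),
      ← ENNReal.ofReal_mul (by positivity), mul_one_div]
  simp only [hmoment, fun v => lintegral_mul_sqrt_mul_exp_neg_mul (normSq v).cast_nonneg ha]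
  rw [← lintegral_tsum fun _ => by fun_prop, ← lintegral_tsum fun _ => by fun_prop]
  refine setLIntegral_congr_fun measurableSet_Ioi fun s (hs : 0 < s) => ?_
  rw [ENNReal.tsum_mul_left, tsum_ofReal_exp_neg_normSq_div hs, ← ENNReal.tsum_mul_left,
    ← ENNReal.tsum_mul_left]
  refine tsum_congr fun v => ?_
  repeat rw [← ENNReal.ofReal_mul (by positivity)]
  rw [neg_add, add_mul, exp_add]
  ring_nf

/-- The Laplace transform of `f`; the value is meaningful where the integral converges. -/
noncomputable def laplace (f : ℝ → ℝ) (z : ℂ) : ℂ :=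
  ∫ t in Ioi (0 : ℝ), (f t : ℂ) * Complex.exp (-z * t)

lemma laplace_ofReal (f : ℝ → ℝ) (a : ℝ) :
    laplace f a = ((∫ t in Ioi (0 : ℝ), f t * exp (-a * t) : ℝ) : ℂ) := by
  rw [← integral_complex_ofReal]
  simp [laplace]

lemma integrableOn_ofReal_mul_cexp {f : ℝ → ℝ} (hf : Measurable f) {z : ℂ}
    (hint : IntegrableOn (fun t => f t * exp (-z.re * t)) (Ioi 0)) :
    IntegrableOn (fun t => (f t : ℂ) * Complex.exp (-z * t)) (Ioi 0) := by
  refine Integrable.mono hint (Measurable.aestronglyMeasurable (by fun_prop)) ?_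
  exact Eventually.of_forall fun t => by simp [Complex.norm_exp]

lemma integrableOn_of_lintegral_eq {f : ℝ → ℝ} (hf : Measurable f) (hf0 : ∀ t > 0, 0 ≤ f t)
    {a c : ℝ} (h : ∫⁻ t in Ioi (0 : ℝ), ENNReal.ofReal (f t * exp (-a * t)) = ENNReal.ofReal c) :
    IntegrableOn (fun t => f t * exp (-a * t)) (Ioi 0) := by
  refine ⟨by fun_prop, ?_⟩
  rw [hasFiniteIntegral_iff_ofReal, h]
  · exact ENNReal.ofReal_lt_top
  · filter_upwards [ae_restrict_mem measurableSet_Ioi] with t ht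
    exact mul_nonneg (hf0 t ht) (exp_pos _).le

-- `z ↦ laplace f (-z)` is the moment generating function of the measure with density `f`.
lemma differentiableOn_laplace {f : ℝ → ℝ} (hf : Measurable f) (hf0 : ∀ t > 0, 0 ≤ f t)
    (hint : ∀ a > 0, IntegrableOn (fun t => f t * exp (-a * t)) (Ioi 0)) :
    DifferentiableOn ℂ (laplace f) {z | 0 < z.re} := by
  set μ := (volume.restrict (Ioi (0 : ℝ))).withDensity fun t => ENNReal.ofReal (f t)
  have hfm : Measurable fun t => ENNReal.ofReal (f t) := by fun_prop
  have hfin : ∀ᵐ t ∂volume.restrict (Ioi (0 : ℝ)), ENNReal.ofReal (f t) < ⊤ :=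
    Eventually.of_forall fun t => ENNReal.ofReal_lt_top
  have hmgf (z : ℂ) : ProbabilityTheory.complexMGF id μ (-z) = laplace f z := by
    rw [ProbabilityTheory.complexMGF, integral_withDensity_eq_integral_toReal_smul hfm hfin]
    refine setIntegral_congr_fun measurableSet_Ioi fun t ht => ?_
    simp [ENNReal.toReal_ofReal (hf0 t ht)]
  have hexp : Iio (0 : ℝ) ⊆ interior (ProbabilityTheory.integrableExpSet id μ) := by
    refine interior_maximal (fun a (ha : a < 0) => ?_) isOpen_Iio
    rw [ProbabilityTheory.integrableExpSet, mem_ofPred_eq,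
      integrable_withDensity_iff_integrable_smul' hfm hfin]
    refine (hint (-a) (neg_pos.2 ha)).congr ?_
    filter_upwards [ae_restrict_mem measurableSet_Ioi] with t ht
    simp [ENNReal.toReal_ofReal (hf0 t ht)]
  rw [← funext hmgf]
  refine ProbabilityTheory.differentiableOn_complexMGF.comp differentiableOn_id.neg fun z hz => ?_
  exact hexp (by simpa using hz)

lemma laplace_eq_of_eq_ofReal {f : ℝ → ℝ} (hf : Measurable f) (hf0 : ∀ t > 0, 0 ≤ f t)
    (hint : ∀ a > 0, IntegrableOn (fun t => f t * exp (-a * t)) (Ioi 0))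
    {G : ℂ → ℂ} (hG : DifferentiableOn ℂ G {z | 0 < z.re})
    (h : ∀ a : ℝ, 0 < a → laplace f a = G a) {z : ℂ} (hz : 0 < z.re) : laplace f z = G z := by
  have hopen : IsOpen {z : ℂ | 0 < z.re} := isOpen_lt continuous_const Complex.continuous_re
  have hpre : IsPreconnected {z : ℂ | 0 < z.re} := (convex_halfSpace_re_gt 0).isPreconnected
  have hpos : ∀ᶠ a : ℝ in 𝓝[≠] 1, laplace f a = G a :=
    nhdsWithin_le_nhds ((eventually_gt_nhds one_pos).mono h)
  have hcoe : Tendsto (fun a : ℝ => (a : ℂ)) (𝓝[≠] 1) (𝓝[≠] ((1 : ℝ) : ℂ)) := by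
    refine tendsto_nhdsWithin_iff.2
      ⟨(Complex.continuous_ofReal.tendsto 1).mono_left nhdsWithin_le_nhds, ?_⟩
    filter_upwards [self_mem_nhdsWithin] with a ha using mt Complex.ofReal_inj.1 ha
  have hA : AnalyticOnNhd ℂ (laplace f) {z | 0 < z.re} :=
    (differentiableOn_laplace hf hf0 hint).analyticOnNhd hopen
  exact hA.eqOn_of_preconnected_of_frequently_eq (hG.analyticOnNhd hopen) hpre (by simp)
    (hcoe.frequently hpos.frequently) hz

lemma integrableOn_pow_mul_exp_neg_mul (k : ℕ) {a : ℝ} (ha : 0 < a) :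
    IntegrableOn (fun t : ℝ => t ^ k * exp (-a * t)) (Ioi 0) := by
  have hk : (-1 : ℝ) < k := neg_one_lt_zero.trans_le k.cast_nonneg
  simpa using integrableOn_rpow_mul_exp_neg_mul_rpow hk one_pos ha

lemma laplace_pow (k : ℕ) {z : ℂ} (hz : 0 < z.re) :
    laplace (fun t => t ^ k) z = k.factorial / z ^ (k + 1) := by
  refine laplace_eq_of_eq_ofReal (by fun_prop) (fun t ht => by positivity)
    (fun a ha => integrableOn_pow_mul_exp_neg_mul k ha) (G := fun z => k.factorial / z ^ (k + 1))
    (fun z (hz : 0 < z.re) => ?_) (fun a ha => ?_) hz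
  · have hz0 : z ^ (k + 1) ≠ 0 := pow_ne_zero _ fun h => by simp [h] at hz
    have : DifferentiableAt ℂ (fun z : ℂ => k.factorial / z ^ (k + 1)) z := by
      fun_prop (disch := assumption)
    exact this.differentiableWithinAt
  · have h := integral_rpow_mul_exp_neg_mul_Ioi (a := k + 1) (by positivity) ha
    simp only [add_sub_cancel_right, rpow_natCast, Gamma_nat_eq_factorial] at h
    simp only [laplace_ofReal, neg_mul, h]
    rw [← Nat.cast_succ, rpow_natCast]
    push_cast
    rw [one_div_pow, one_div_mul_eq_div]

/-- The denominator `z² + 4π²|v|²` of the term of index `v` in the Laplace transform of the Riesz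
mean; its zeros are `±2πi|v|`. -/
noncomputable def denom (z : ℂ) (v : ℤ × ℤ) : ℂ := z ^ 2 + 4 * π ^ 2 * normSq v

lemma denom_eq_mul (z : ℂ) (v : ℤ × ℤ) : denom z v =
    (z + (2 * π * √(normSq v) : ℝ) * Complex.I) * (z - (2 * π * √(normSq v) : ℝ) * Complex.I) := by
  have hsqrt : ((√(normSq v) : ℝ) : ℂ) ^ 2 = normSq v := by
    exact_mod_cast sq_sqrt (normSq v).cast_nonneg
  rw [denom, ← hsqrt]
  push_cast
  linear_combination (4 * π ^ 2 * (√(normSq v) : ℂ) ^ 2) * Complex.I_sq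

lemma sub_norm_sq_le_norm_denom (z : ℂ) (v : ℤ × ℤ) :
    4 * π ^ 2 * normSq v - ‖z‖ ^ 2 ≤ ‖denom z v‖ := by
  have h := norm_sub_norm_le ((4 * π ^ 2 * normSq v : ℝ) : ℂ) (-z ^ 2)
  rw [Complex.norm_real, norm_of_nonneg (by positivity), norm_neg, norm_pow, sub_neg_eq_add,
    add_comm] at h
  simpa [denom] using h

lemma re_le_norm_add_mul_I (z : ℂ) (x : ℝ) : z.re ≤ ‖z + x * Complex.I‖ := by
  simpa using Complex.re_le_norm (z + x * Complex.I)

lemma re_le_norm_sub_mul_I (z : ℂ) (x : ℝ) : z.re ≤ ‖z - x * Complex.I‖ := by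
  simpa using Complex.re_le_norm (z - x * Complex.I)

lemma re_sq_le_norm_denom {z : ℂ} (hz : 0 ≤ z.re) (v : ℤ × ℤ) : z.re ^ 2 ≤ ‖denom z v‖ := by
  rw [denom_eq_mul, norm_mul, sq]
  exact mul_le_mul (re_le_norm_add_mul_I z _) (re_le_norm_sub_mul_I z _) hz (norm_nonneg _)

lemma denom_ne_zero {z : ℂ} (hz : 0 < z.re) (v : ℤ × ℤ) : denom z v ≠ 0 :=
  norm_pos_iff.1 <| (pow_pos hz 2).trans_le (re_sq_le_norm_denom hz.le v)

lemma norm_div_denom_pow_three_le {z : ℂ} {v : ℤ × ℤ} {c δ R : ℝ} (hc : 0 < c) (hc1 : c ≤ 1)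
    (hδ : 0 < δ) (hzR : ‖z‖ ^ 2 ≤ R) (hzδ : c * δ ≤ ‖denom z v‖) :
    ‖(c / denom z v : ℂ) ^ 3‖ ≤ (1 + R / δ + 1 / δ) ^ 3 * (1 / (1 + (normSq v : ℝ)) ^ 3) := by
  have hX := sub_norm_sq_le_norm_denom z v
  set X := ‖denom z v‖ with hX_def
  set n : ℝ := (normSq v : ℝ)
  have hn : 0 ≤ n := Nat.cast_nonneg _
  have hX0 : 0 < X := (mul_pos hc hδ).trans_le hzδ
  have : 0 ≤ R := (sq_nonneg _).trans hzR
  have hcX : c ≤ X / δ := (le_div_iff₀ hδ).2 hzδ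
  have hn_le : n ≤ 4 * π ^ 2 * n := le_mul_of_one_le_left hn (by nlinarith [pi_gt_three])
  have hcn : c * n ≤ X + R * (X / δ) := calc
    c * n ≤ c * (X + R) := by gcongr; linarith
    _ = c * X + R * c := by ring
    _ ≤ 1 * X + R * (X / δ) := by gcongr
    _ = X + R * (X / δ) := by rw [one_mul]
  have hkey : c * (1 + n) ≤ (1 + R / δ + 1 / δ) * X := by
    linarith [show (1 + R / δ + 1 / δ) * X = X + R * (X / δ) + X / δ by ring]
  rw [norm_pow, norm_div, Complex.norm_real, norm_of_nonneg hc.le, ← hX_def, ← one_div_pow,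
    ← mul_pow, mul_one_div]
  exact pow_le_pow_left₀ (by positivity) ((div_le_div_iff₀ hX0 (by positivity)).2 hkey) 3

lemma summable_one_div_denom_pow_three {z : ℂ} (hz : 0 < z.re) :
    Summable fun v => (1 / denom z v) ^ 3 := by
  refine .of_norm_bounded ((summable_one_div_one_add_normSq_pow (k := 3) (by norm_num)).mul_left
    ((1 + ‖z‖ ^ 2 / z.re ^ 2 + 1 / z.re ^ 2) ^ 3)) fun v => ?_
  simpa using norm_div_denom_pow_three_le one_pos le_rfl (pow_pos hz 2) le_rfl
    (by simpa using re_sq_le_norm_denom hz.le v)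

/-- The Laplace transform of `t ↦ t * rieszSum t`, as a series. -/
noncomputable def laplaceSeries (z : ℂ) : ℂ := 16 * π * z * ∑' v, (1 / denom z v) ^ 3

lemma differentiableOn_laplaceSeries : DifferentiableOn ℂ laplaceSeries {z | 0 < z.re} := by
  intro z (hz : 0 < z.re)
  set U : Set ℂ := {w | z.re / 2 < w.re} ∩ Metric.ball 0 (‖z‖ + 1)
  have hU : IsOpen U :=
    (isOpen_lt continuous_const Complex.continuous_re).inter Metric.isOpen_ball
  have hzU : z ∈ U := ⟨half_lt_self hz, by simp⟩
  have hseries : DifferentiableOn ℂ (fun w => ∑' v, (1 / denom w v) ^ 3) U := by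
    refine Complex.differentiableOn_tsum_of_summable_norm
      ((summable_one_div_one_add_normSq_pow (k := 3) (by norm_num)).mul_left
        ((1 + (‖z‖ + 1) ^ 2 / (z.re / 2) ^ 2 + 1 / (z.re / 2) ^ 2) ^ 3))
      (fun v w hw => ?_) hU (fun v w hw => ?_)
    · have hw0 : 0 < w.re := (half_pos hz).trans hw.1
      have := denom_ne_zero hw0 v
      have : DifferentiableAt ℂ (fun w => (1 / denom w v) ^ 3) w := by
        unfold denom at *
        fun_prop (disch := assumption)
      exact this.differentiableWithinAt
    · have hw0 : 0 < w.re := (half_pos hz).trans hw.1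
      have hwR : ‖w‖ ≤ ‖z‖ + 1 := (mem_ball_zero_iff.1 hw.2).le
      have hwδ : (z.re / 2) ^ 2 ≤ ‖denom w v‖ :=
        (pow_le_pow_left₀ (by positivity) hw.1.le 2).trans (re_sq_le_norm_denom hw0.le v)
      simpa only [Complex.ofReal_one] using norm_div_denom_pow_three_le one_pos le_rfl
        (by positivity) (pow_le_pow_left₀ (norm_nonneg w) hwR 2) (by rwa [one_mul])
  have := hseries.differentiableAt (hU.mem_nhds hzU)
  unfold laplaceSeries
  exact DifferentiableAt.differentiableWithinAt (by fun_prop)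

lemma ofReal_rieszSum (t : ℝ) :
    ENNReal.ofReal (rieszSum t) = ∑' v : ℤ × ℤ, ENNReal.ofReal √(t ^ 2 - normSq v) := by
  refine ENNReal.ofReal_tsum_of_nonneg (fun _ => sqrt_nonneg _) (summable_of_hasFiniteSupport ?_)
  refine (finite_setOf_normSq_lt (t ^ 2)).subset fun v hv => ?_
  exact sub_pos.1 (sqrt_ne_zero'.1 hv)

lemma rieszSum_nonneg (t : ℝ) : 0 ≤ rieszSum t := tsum_nonneg fun _ => sqrt_nonneg _

lemma measurable_rieszSum : Measurable rieszSum := by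
  have h (t : ℝ) : rieszSum t = (∑' v : ℤ × ℤ, ENNReal.ofReal √(t ^ 2 - normSq v)).toReal := by
    rw [← ofReal_rieszSum, ENNReal.toReal_ofReal (rieszSum_nonneg t)]
  rw [funext h]
  exact (Measurable.tsum fun v => by fun_prop).ennreal_toReal

lemma laplaceSeries_ofReal (a : ℝ) : laplaceSeries a =
    ((∑' v : ℤ × ℤ, 16 * π * a / (a ^ 2 + 4 * π ^ 2 * normSq v) ^ 3 : ℝ) : ℂ) := by
  rw [laplaceSeries, ← tsum_mul_left, Complex.ofReal_tsum]
  refine tsum_congr fun v => ?_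
  rw [denom, one_div_pow, mul_one_div]
  push_cast
  rfl

lemma lintegral_mul_rieszSum_mul_exp {a : ℝ} (ha : 0 < a) :
    ∫⁻ t in Ioi (0 : ℝ), ENNReal.ofReal (t * rieszSum t * exp (-a * t)) =
      ENNReal.ofReal (∑' v : ℤ × ℤ, 16 * π * a / (a ^ 2 + 4 * π ^ 2 * normSq v) ^ 3) := by
  have hsum : Summable fun v : ℤ × ℤ => 16 * π * a / (a ^ 2 + 4 * π ^ 2 * normSq v) ^ 3 := by
    rw [← Complex.summable_ofReal]
    refine ((summable_one_div_denom_pow_three (z := a) (by simpa using ha)).mul_left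
      (16 * π * a : ℂ)).congr fun v => ?_
    rw [denom, one_div_pow, mul_one_div]
    push_cast
    rfl
  rw [ENNReal.ofReal_tsum_of_nonneg (fun v => by positivity) hsum,
    ← tsum_lintegral_mul_sqrt_mul_exp_neg_mul ha, ← lintegral_tsum fun _ => by fun_prop]
  refine setLIntegral_congr_fun measurableSet_Ioi fun t (ht : 0 < t) => ?_
  rw [mul_right_comm, ENNReal.ofReal_mul (by positivity), ofReal_rieszSum, ← ENNReal.tsum_mul_left]
  refine tsum_congr fun v => ?_
  rw [← ENNReal.ofReal_mul (by positivity), mul_right_comm]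

lemma measurable_mul_rieszSum : Measurable fun t => t * rieszSum t :=
  measurable_id.mul measurable_rieszSum

lemma integrableOn_mul_rieszSum_mul_exp {a : ℝ} (ha : 0 < a) :
    IntegrableOn (fun t => t * rieszSum t * exp (-a * t)) (Ioi 0) :=
  integrableOn_of_lintegral_eq measurable_mul_rieszSum
    (fun t ht => mul_nonneg ht.le (rieszSum_nonneg t)) (lintegral_mul_rieszSum_mul_exp ha)

lemma laplace_mul_rieszSum {z : ℂ} (hz : 0 < z.re) :
    laplace (fun t => t * rieszSum t) z = laplaceSeries z := by
  have hnonneg (t : ℝ) (ht : 0 < t) : 0 ≤ t * rieszSum t := mul_nonneg ht.le (rieszSum_nonneg t)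
  refine laplace_eq_of_eq_ofReal measurable_mul_rieszSum hnonneg
    (fun a ha => integrableOn_mul_rieszSum_mul_exp ha) differentiableOn_laplaceSeries
    (fun a ha => ?_) hz
  rw [laplace_ofReal, laplaceSeries_ofReal, integral_eq_lintegral_of_nonneg_ae,
    lintegral_mul_rieszSum_mul_exp ha,
    ENNReal.toReal_ofReal (tsum_nonneg fun v => by positivity)]
  · filter_upwards [ae_restrict_mem measurableSet_Ioi] with t ht
    exact mul_nonneg (hnonneg t ht) (exp_pos _).le
  · exact (integrableOn_mul_rieszSum_mul_exp ha).aestronglyMeasurable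

/-! ### Boundary behaviour of the Laplace transform -/

/-- The weight `t(Ct - P(t))`, with `P` the error of the Riesz mean; it is eventually nonnegative
when `P(t) ≤ Ct` for all large `t`. -/
noncomputable def errorWeight (C t : ℝ) : ℝ := t * (C * t - rieszError t)

lemma errorWeight_eq (C t : ℝ) :
    errorWeight C t = C * t ^ 2 + 2 * π / 3 * t ^ 4 - t * rieszSum t := by
  rw [errorWeight, rieszError]
  ring

lemma measurable_errorWeight (C : ℝ) : Measurable (errorWeight C) := by
  rw [funext (errorWeight_eq C)]
  exact Measurable.sub (by fun_prop) measurable_mul_rieszSum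

lemma integrableOn_errorWeight_mul_exp (C : ℝ) {ε : ℝ} (hε : 0 < ε) :
    IntegrableOn (fun t => errorWeight C t * exp (-ε * t)) (Ioi 0) := by
  have h := (((integrableOn_pow_mul_exp_neg_mul 2 hε).const_mul C).add
    ((integrableOn_pow_mul_exp_neg_mul 4 hε).const_mul (2 * π / 3))).sub
    (integrableOn_mul_rieszSum_mul_exp hε)
  refine IntegrableOn.congr_fun h (fun t _ => ?_) measurableSet_Ioi
  simp only [errorWeight_eq, Pi.sub_apply, Pi.add_apply]
  ring

lemma laplace_errorWeight (C : ℝ) {z : ℂ} (hz : 0 < z.re) :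
    laplace (errorWeight C) z = C * (2 / z ^ 3) - (laplaceSeries z - 16 * π / z ^ 5) := by
  have hint {f : ℝ → ℝ} (hf : Measurable f)
      (h : IntegrableOn (fun t => f t * exp (-z.re * t)) (Ioi 0)) (c : ℂ) :
      IntegrableOn (fun t => c * ((f t : ℂ) * Complex.exp (-z * t))) (Ioi 0) :=
    (integrableOn_ofReal_mul_cexp hf h).const_mul c
  have h2 := hint (f := fun t => t ^ 2) (by fun_prop) (integrableOn_pow_mul_exp_neg_mul 2 hz) C
  have h4 := hint (f := fun t => t ^ 4) (by fun_prop) (integrableOn_pow_mul_exp_neg_mul 4 hz)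
    (2 * π / 3)
  have hR := hint measurable_mul_rieszSum (integrableOn_mul_rieszSum_mul_exp hz) 1
  calc laplace (errorWeight C) z
      = C * laplace (fun t => t ^ 2) z + 2 * π / 3 * laplace (fun t => t ^ 4) z -
          1 * laplace (fun t => t * rieszSum t) z := by
        simp only [laplace, ← integral_const_mul]
        rw [← integral_add h2 h4, ← integral_sub (by exact h2.add h4) hR]
        refine integral_congr_ae (Eventually.of_forall fun t => ?_)
        simp only [errorWeight_eq]
        push_cast
        ring
    _ = C * (2 / z ^ 3) - (laplaceSeries z - 16 * π / z ^ 5) := by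
        rw [laplace_pow 2 hz, laplace_pow 4 hz, laplace_mul_rieszSum hz]
        norm_num [Nat.factorial]
        ring

/-- The point `ε + 2πil`, which approaches the frequency `l` on the imaginary axis as `ε → 0`. -/
noncomputable def approach (l ε : ℝ) : ℂ := ε + (2 * π * l : ℝ) * Complex.I

@[simp] lemma approach_re (l ε : ℝ) : (approach l ε).re = ε := by simp [approach]

lemma tendsto_approach (l : ℝ) :
    Tendsto (approach l) (𝓝[>] 0) (𝓝 ((2 * π * l : ℝ) * Complex.I)) := by
  have hcont : Continuous (approach l) := by unfold approach; fun_prop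
  have h := hcont.tendsto 0
  simp only [approach, Complex.ofReal_zero, zero_add] at h
  exact h.mono_left nhdsWithin_le_nhds

lemma re_laplace_approach {f : ℝ → ℝ} (hf : Measurable f) (l : ℝ) {ε : ℝ}
    (hint : IntegrableOn (fun t => f t * exp (-ε * t)) (Ioi 0)) :
    (laplace f (approach l ε)).re =
      ∫ t in Ioi (0 : ℝ), f t * exp (-ε * t) * cos (2 * π * l * t) := by
  have hexp (t : ℝ) : Complex.exp (-approach l ε * t) =
      (exp (-ε * t) : ℝ) * Complex.exp ((-(2 * π * l * t) : ℝ) * Complex.I) := by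
    rw [Complex.ofReal_exp, ← Complex.exp_add, approach]
    push_cast
    ring_nf
  rw [laplace, ← RCLike.re_to_complex,
    ← integral_re (integrableOn_ofReal_mul_cexp hf (by simpa using hint))]
  refine integral_congr_ae (Eventually.of_forall fun t => ?_)
  simp only [hexp, ← mul_assoc, ← Complex.ofReal_mul, RCLike.re_to_complex, Complex.re_ofReal_mul,
    Complex.exp_ofReal_mul_I_re, cos_neg]

lemma re_le_norm_denom {z : ℂ} (hz : 0 ≤ z.re) {v : ℤ × ℤ} (hv : v ≠ 0) :
    z.re ≤ ‖denom z v‖ := by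
  have hn : (1 : ℝ) ≤ normSq v := by
    exact_mod_cast Nat.one_le_iff_ne_zero.2 (mt normSq_eq_zero.1 hv)
  set x : ℝ := 2 * π * √(normSq v)
  have hx : 1 ≤ x := by nlinarith [one_le_sqrt.2 hn, pi_gt_three]
  have hplus := re_le_norm_add_mul_I z x
  have hminus := re_le_norm_sub_mul_I z x
  have hsum : 2 ≤ ‖z + x * Complex.I‖ + ‖z - x * Complex.I‖ := by
    have h := norm_sub_le (z + x * Complex.I) (z - x * Complex.I)
    rw [add_sub_sub_cancel, ← two_mul, norm_mul, norm_mul, Complex.norm_real, Complex.norm_I,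
      Complex.norm_two, norm_of_nonneg (by positivity)] at h
    linarith
  rw [denom_eq_mul, norm_mul]
  rcases le_total 1 ‖z + x * Complex.I‖ with _ | _ <;> nlinarith

lemma laplaceSeries_sub {z : ℂ} (hz : 0 < z.re) : laplaceSeries z - 16 * π / z ^ 5 =
    16 * π * z * ∑' v, if v = 0 then 0 else (1 / denom z v) ^ 3 := by
  have hz0 : z ≠ 0 := fun h => by simp [h] at hz
  have hzero : denom z 0 = z ^ 2 := by simp [denom, normSq]
  rw [laplaceSeries, (summable_one_div_denom_pow_three hz).tsum_eq_add_tsum_ite 0, hzero]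
  field_simp
  ring

/-- The sum of `1 / |v|²` over the nonzero lattice points with `|v| = |l|`; the origin contributes
`1 / 0 = 0` to the case `l = 0`. -/
noncomputable def shellSum (l : ℝ) : ℝ :=
  ∑' v : ℤ × ℤ, if (normSq v : ℝ) = l ^ 2 then 1 / (normSq v : ℝ) else 0

-- On the shell the denominator has a simple zero; elsewhere the factor `ε` wins.
lemma tendsto_div_denom_approach (l : ℝ) {v : ℤ × ℤ} (hv : v ≠ 0) :
    Tendsto (fun ε : ℝ => (ε / denom (approach l ε) v : ℂ) ^ 3) (𝓝[>] 0)
      (𝓝 (if (normSq v : ℝ) = l ^ 2 then (1 / ((4 * π * l : ℝ) * Complex.I)) ^ 3 else 0)) := by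
  have hε : Tendsto (fun ε : ℝ => (ε : ℂ)) (𝓝[>] 0) (𝓝 0) :=
    (Complex.continuous_ofReal.tendsto 0).mono_left nhdsWithin_le_nhds
  split_ifs with hshell
  · have hl : l ≠ 0 := by
      rintro rfl
      exact hv (normSq_eq_zero.1 (by exact_mod_cast hshell.trans (zero_pow two_ne_zero)))
    have hlim : Tendsto (fun ε : ℝ => (1 / (ε + (4 * π * l : ℝ) * Complex.I)) ^ 3) (𝓝[>] 0)
        (𝓝 ((1 / ((4 * π * l : ℝ) * Complex.I)) ^ 3)) := by
      have h := hε.add_const ((4 * π * l : ℝ) * Complex.I)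
      rw [zero_add] at h
      exact (tendsto_const_nhds.div h (by simp [hl, pi_ne_zero])).pow 3
    refine hlim.congr' ?_
    filter_upwards [self_mem_nhdsWithin] with ε (hε0 : 0 < ε)
    have hfactor : denom (approach l ε) v = ε * (ε + (4 * π * l : ℝ) * Complex.I) := by
      have hn : (normSq v : ℂ) = l ^ 2 := by exact_mod_cast congrArg ((↑) : ℝ → ℂ) hshell
      rw [denom, approach, hn]
      push_cast
      linear_combination (4 * π ^ 2 * l ^ 2 : ℂ) * Complex.I_sq
    rw [hfactor, div_mul_eq_div_div, div_self (Complex.ofReal_ne_zero.2 hε0.ne')]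
  · have hlim : Tendsto (fun ε => denom (approach l ε) v) (𝓝[>] 0)
        (𝓝 (((2 * π * l : ℝ) * Complex.I) ^ 2 + 4 * π ^ 2 * normSq v)) :=
      ((tendsto_approach l).pow 2).add_const _
    have hne : ((2 * π * l : ℝ) * Complex.I) ^ 2 + 4 * π ^ 2 * normSq v ≠ 0 := by
      have : ((2 * π * l : ℝ) * Complex.I) ^ 2 + 4 * π ^ 2 * normSq v =
          4 * π ^ 2 * ((normSq v - l ^ 2 : ℝ) : ℂ) := by
        push_cast
        linear_combination (4 * π ^ 2 * l ^ 2 : ℂ) * Complex.I_sq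
      rw [this]
      exact mul_ne_zero (by simp [pi_ne_zero]) (Complex.ofReal_ne_zero.2 (sub_ne_zero.2 hshell))
    simpa using (hε.div hlim hne).pow 3

lemma norm_approach_le (l : ℝ) {ε : ℝ} (hε : ε ∈ Ioc (0 : ℝ) 1) :
    ‖approach l ε‖ ≤ 1 + 2 * π * |l| := by
  refine (norm_add_le _ _).trans ?_
  rw [norm_mul, Complex.norm_real, Complex.norm_real, Complex.norm_I, mul_one,
    norm_of_nonneg hε.1.le, norm_eq_abs, abs_mul, abs_of_pos two_pi_pos]
  linarith [hε.2]

lemma tendsto_tsum_div_denom_approach (l : ℝ) :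
    Tendsto (fun ε : ℝ => ∑' v, if v = 0 then 0 else (ε / denom (approach l ε) v : ℂ) ^ 3) (𝓝[>] 0)
      (𝓝 (∑' v, if v = 0 then 0 else
        if (normSq v : ℝ) = l ^ 2 then (1 / ((4 * π * l : ℝ) * Complex.I)) ^ 3 else 0)) := by
  refine tendsto_tsum_of_dominated_convergence
    ((summable_one_div_one_add_normSq_pow (k := 3) (by norm_num)).mul_left
      ((1 + (1 + 2 * π * |l|) ^ 2 / 1 + 1 / 1) ^ 3)) (fun v => ?_) ?_
  · rcases eq_or_ne v 0 with rfl | hv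
    · simp only [if_pos, tendsto_const_nhds]
    · simpa only [if_neg hv] using tendsto_div_denom_approach l hv
  · filter_upwards [Ioc_mem_nhdsGT one_pos] with ε hε v
    split_ifs with hv
    · rw [norm_zero]
      positivity
    · refine norm_div_denom_pow_three_le hε.1 hε.2 one_pos
        (pow_le_pow_left₀ (norm_nonneg _) (norm_approach_le l hε) 2) ?_
      simpa using re_le_norm_denom (z := approach l ε) (by simpa using hε.1.le) hv

lemma tendsto_laplaceSeries_sub_approach (l : ℝ) :
    Tendsto (fun ε : ℝ => (ε : ℂ) ^ 3 *
      (laplaceSeries (approach l ε) - 16 * π / approach l ε ^ 5)) (𝓝[>] 0)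
      (𝓝 ((-(shellSum l / (2 * π)) : ℝ) : ℂ)) := by
  have hpi : (π : ℂ) ≠ 0 := Complex.ofReal_ne_zero.2 pi_ne_zero
  have hlim := ((tendsto_approach l).const_mul (16 * π : ℂ)).mul
    (tendsto_tsum_div_denom_approach l)
  have hvalue : 16 * π * ((2 * π * l : ℝ) * Complex.I) * (∑' v, if v = 0 then 0 else
      if (normSq v : ℝ) = l ^ 2 then (1 / ((4 * π * l : ℝ) * Complex.I)) ^ 3 else 0) =
      ((-(shellSum l / (2 * π)) : ℝ) : ℂ) := by
    rw [shellSum, ← tsum_div_const, ← tsum_neg, Complex.ofReal_tsum, ← tsum_mul_left]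
    refine tsum_congr fun v => ?_
    split_ifs with hv hshell hshell
    · simp [normSq_eq_zero.2 hv]
    · simp
    · have hl : l ≠ 0 := by
        rintro rfl
        exact hv (normSq_eq_zero.1 (by exact_mod_cast hshell.trans (zero_pow two_ne_zero)))
      have hl' : (l : ℂ) ≠ 0 := Complex.ofReal_ne_zero.2 hl
      rw [hshell]
      push_cast
      field_simp
      linear_combination (64 : ℂ) * Complex.I_sq
    · simp
  rw [hvalue] at hlim
  refine hlim.congr' ?_
  filter_upwards [self_mem_nhdsWithin] with ε (hε : 0 < ε)
  rw [laplaceSeries_sub (by simpa using hε), mul_left_comm, ← tsum_mul_left (a := (ε : ℂ) ^ 3)]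
  refine congrArg (16 * π * approach l ε * ·) (tsum_congr fun v => ?_)
  rw [mul_ite, mul_zero, ← mul_pow, mul_one_div]

lemma tendsto_two_div_approach_pow_three (l : ℝ) :
    Tendsto (fun ε : ℝ => (ε : ℂ) ^ 3 * (2 / approach l ε ^ 3)) (𝓝[>] 0)
      (𝓝 ((if l = 0 then 2 else 0 : ℝ) : ℂ)) := by
  split_ifs with hl
  · refine tendsto_const_nhds.congr' ?_
    filter_upwards [self_mem_nhdsWithin] with ε (hε : 0 < ε)
    have hε0 : (ε : ℂ) ≠ 0 := Complex.ofReal_ne_zero.2 hε.ne'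
    simp only [approach, hl, mul_zero, Complex.ofReal_zero, zero_mul, add_zero]
    field_simp
    norm_num
  · have hε : Tendsto (fun ε : ℝ => (ε : ℂ)) (𝓝[>] 0) (𝓝 0) :=
      (Complex.continuous_ofReal.tendsto 0).mono_left nhdsWithin_le_nhds
    have hne : ((2 * π * l : ℝ) * Complex.I) ^ 3 ≠ 0 := by simp [hl, pi_ne_zero]
    simpa using (hε.pow 3).mul
      ((tendsto_const_nhds (x := (2 : ℂ))).div ((tendsto_approach l).pow 3) hne)

lemma tendsto_integral_errorWeight_mul_cos (C l : ℝ) :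
    Tendsto (fun ε : ℝ => ε ^ 3 *
      ∫ t in Ioi (0 : ℝ), errorWeight C t * exp (-ε * t) * cos (2 * π * l * t)) (𝓝[>] 0)
      (𝓝 (C * (if l = 0 then 2 else 0) + shellSum l / (2 * π))) := by
  have hlim := (Complex.continuous_re.tendsto _).comp
    (((tendsto_two_div_approach_pow_three l).const_mul (C : ℂ)).sub
      (tendsto_laplaceSeries_sub_approach l))
  rw [← Complex.ofReal_mul, ← Complex.ofReal_sub, Complex.ofReal_re, sub_neg_eq_add] at hlim
  refine hlim.congr' ?_
  filter_upwards [self_mem_nhdsWithin] with ε (hε : 0 < ε)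
  rw [← re_laplace_approach (measurable_errorWeight C) l (integrableOn_errorWeight_mul_exp C hε),
    laplace_errorWeight C (by simpa using hε), ← Complex.re_ofReal_mul, Function.comp_apply]
  push_cast
  ring_nf

/-! ### An inequality for nonnegative cosine polynomials -/

lemma exists_le_integral_mul_exp {q : ℝ → ℝ} {t₀ : ℝ} (hq : ∀ t, 0 < t → t₀ < t → 0 ≤ q t)
    (hint : ∀ ε : ℝ, 0 < ε → IntegrableOn (fun t => q t * exp (-ε * t)) (Ioi 0)) :
    ∃ B, ∀ ε : ℝ, 0 < ε → B ≤ ∫ t in Ioi (0 : ℝ), q t * exp (-ε * t) := by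
  have hbound : IntegrableOn (fun t => -(exp t₀ * |q t * exp (-1 * t)|)) (Ioi 0) :=
    ((hint 1 one_pos).abs.const_mul _).neg
  refine ⟨∫ t in Ioi (0 : ℝ), -(exp t₀ * |q t * exp (-1 * t)|), fun ε hε =>
    setIntegral_mono_on hbound (hint ε hε) measurableSet_Ioi fun t (ht : 0 < t) => ?_⟩
  rcases lt_or_ge t₀ t with h | h
  · exact (neg_nonpos.2 (by positivity)).trans (mul_nonneg (hq t ht h) (exp_nonneg _))
  · refine (neg_le_neg ?_).trans (neg_abs_le _)
    rw [abs_mul, abs_mul, abs_exp, abs_exp, mul_left_comm, ← exp_add]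
    refine mul_le_mul_of_nonneg_left ((exp_le_one_iff.2 ?_).trans (one_le_exp ?_)) (abs_nonneg _)
    · nlinarith
    · linarith

lemma integrableOn_errorWeight_mul_exp_mul_cos (C l : ℝ) {ε : ℝ} (hε : 0 < ε) :
    IntegrableOn (fun t => errorWeight C t * exp (-ε * t) * cos (2 * π * l * t)) (Ioi 0) :=
  (integrableOn_errorWeight_mul_exp C hε).mul_bdd (c := 1) (by fun_prop)
    (Eventually.of_forall fun _ => abs_cos_le_one _)

-- Multiplied by `ε³`, a lower bound for the transform that is uniform in `ε` disappears as `ε → 0`.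
lemma sum_mul_boundary_value_nonneg {C t₀ : ℝ} (hC : ∀ t, t₀ < t → rieszError t ≤ C * t)
    {ι : Type*} (s : Finset ι) (c l : ι → ℝ)
    (hnonneg : ∀ t : ℝ, 0 ≤ ∑ j ∈ s, c j * cos (2 * π * l j * t)) :
    0 ≤ ∑ j ∈ s, c j * (C * (if l j = 0 then 2 else 0) + shellSum (l j) / (2 * π)) := by
  set q : ℝ → ℝ := fun t => errorWeight C t * ∑ j ∈ s, c j * cos (2 * π * l j * t)
  have hexpand (ε t : ℝ) : q t * exp (-ε * t) =
      ∑ j ∈ s, c j * (errorWeight C t * exp (-ε * t) * cos (2 * π * l j * t)) := by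
    simp only [q, Finset.mul_sum, Finset.sum_mul]
    exact Finset.sum_congr rfl fun j _ => by ring
  have hterm (ε : ℝ) (hε : 0 < ε) (j : ι) (_ : j ∈ s) :=
    (integrableOn_errorWeight_mul_exp_mul_cos C (l j) hε).const_mul (c j)
  obtain ⟨B, hB⟩ := exists_le_integral_mul_exp (q := q) (t₀ := t₀)
    (fun t ht0 ht => mul_nonneg (mul_nonneg ht0.le (sub_nonneg.2 (hC t ht))) (hnonneg t))
    (fun ε hε => by simpa only [hexpand, IntegrableOn] using integrable_finsetSum s (hterm ε hε))
  have hlim := tendsto_finsetSum s fun j _ =>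
    (tendsto_integral_errorWeight_mul_cos C (l j)).const_mul (c j)
  have hzero : Tendsto (fun ε : ℝ => ε ^ 3 * B) (𝓝[>] 0) (𝓝 0) := by
    have h : Continuous fun ε : ℝ => ε ^ 3 * B := by fun_prop
    simpa using (h.tendsto 0).mono_left nhdsWithin_le_nhds
  refine le_of_tendsto_of_tendsto hzero hlim ?_
  filter_upwards [self_mem_nhdsWithin] with ε (hε : 0 < ε)
  calc ε ^ 3 * B ≤ ε ^ 3 * ∫ t in Ioi (0 : ℝ), q t * exp (-ε * t) :=
        mul_le_mul_of_nonneg_left (hB ε hε) (by positivity)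
    _ = _ := by
        simp only [hexpand]
        rw [integral_finsetSum s (hterm ε hε), Finset.mul_sum]
        exact Finset.sum_congr rfl fun j _ => by rw [integral_const_mul, mul_left_comm]

-- Expanding `e^{2ηxy}` as a power series turns the sum into a positive combination of squares.
lemma sum_gaussian_mul_cos_nonneg (L : Finset ℝ) (g : ℝ → ℝ) {η : ℝ} (hη : 0 ≤ η) (ω : ℝ) :
    0 ≤ ∑ p ∈ L ×ˢ L,
      g p.1 * g p.2 * exp (-η * (p.1 - p.2) ^ 2) * cos (ω * (p.1 - p.2)) := by
  set a : ℝ × ℝ → ℝ := fun p =>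
    g p.1 * g p.2 * exp (-η * p.1 ^ 2) * exp (-η * p.2 ^ 2) * cos (ω * (p.1 - p.2))
  have hseries : HasSum (fun k : ℕ => ∑ p ∈ L ×ˢ L, a p * ((2 * η * p.1 * p.2) ^ k / k.factorial))
      (∑ p ∈ L ×ˢ L, a p * exp (2 * η * p.1 * p.2)) :=
    hasSum_sum fun p _ => HasSum.mul_left _ <| by
      simpa only [exp_eq_exp_ℝ] using NormedSpace.expSeries_div_hasSum_exp (2 * η * p.1 * p.2)
  have hsplit (p : ℝ × ℝ) : exp (-η * (p.1 - p.2) ^ 2) =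
      exp (-η * p.1 ^ 2) * exp (-η * p.2 ^ 2) * exp (2 * η * p.1 * p.2) := by
    rw [← exp_add, ← exp_add]
    ring_nf
  have hsquares (k : ℕ) : ∑ p ∈ L ×ˢ L, a p * ((2 * η * p.1 * p.2) ^ k / k.factorial) =
      (2 * η) ^ k / k.factorial *
        ((∑ x ∈ L, g x * exp (-η * x ^ 2) * cos (ω * x) * x ^ k) ^ 2 +
          (∑ x ∈ L, g x * exp (-η * x ^ 2) * sin (ω * x) * x ^ k) ^ 2) := by
    rw [sq, sq, Finset.sum_mul_sum, Finset.sum_mul_sum, ← Finset.sum_product',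
      ← Finset.sum_product', ← Finset.sum_add_distrib, Finset.mul_sum]
    refine Finset.sum_congr rfl fun p _ => ?_
    simp only [a, mul_sub, cos_sub, mul_pow]
    ring
  calc 0 ≤ ∑ p ∈ L ×ˢ L, a p * exp (2 * η * p.1 * p.2) :=
        hseries.nonneg fun k => by rw [hsquares]; positivity
    _ = _ := Finset.sum_congr rfl fun p _ => by rw [hsplit]; ring

end

section

open Finset

/-! ### Parity of frequencies -/

lemma isIntegral_sqrt_natCast (n : ℕ) : IsIntegral ℤ √(n : ℝ) :=
  IsIntegral.of_pow two_pos (by simpa only [sq_sqrt (Nat.cast_nonneg n)] using isIntegral_natCast n)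

lemma not_isIntegral_one_half : ¬ IsIntegral ℤ (1 / 2 : ℝ) := by
  intro h
  have hQ : IsIntegral ℤ (1 / 2 : ℚ) := by
    rw [← isIntegral_algebraMap_iff (B := ℝ) (algebraMap ℚ ℝ).injective]
    simpa using h
  obtain ⟨y, hy⟩ := IsIntegrallyClosed.isIntegral_iff.1 hQ
  have h2 : (2 * y : ℚ) = 1 := by
    rw [show (y : ℚ) = 1 / 2 by simpa using hy]
    norm_num
  have : 2 * y = 1 := by exact_mod_cast h2
  omega

/-- The subgroup `ℤ(1 + √2) + 2𝒪` of `ℝ`, where `𝒪` is the ring of real algebraic integers. The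
norm `|v|` of a lattice point lies in it or in its translate by `1`, according to whether `4`
divides `|v|²` or not. -/
noncomputable def evenFrequencies : AddSubgroup ℝ :=
  AddSubgroup.zmultiples (1 + √2) ⊔
    (integralClosure ℤ ℝ).toSubring.toAddSubgroup.map (AddMonoidHom.mulLeft 2)

lemma mem_evenFrequencies {x : ℝ} :
    x ∈ evenFrequencies ↔ ∃ (k : ℤ) (o : ℝ), IsIntegral ℤ o ∧ k * (1 + √2) + 2 * o = x := by
  simp only [evenFrequencies, AddSubgroup.mem_sup, AddSubgroup.mem_zmultiples_iff,
    AddSubgroup.mem_map]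
  constructor
  · rintro ⟨_, ⟨k, rfl⟩, _, ⟨o, ho, rfl⟩, rfl⟩
    exact ⟨k, o, ho, by simp [mul_add]⟩
  · rintro ⟨k, o, ho, rfl⟩
    exact ⟨_, ⟨k, rfl⟩, _, ⟨o, ho, rfl⟩, by simp [mul_add]⟩

lemma two_mul_mem_evenFrequencies {o : ℝ} (ho : IsIntegral ℤ o) : 2 * o ∈ evenFrequencies :=
  mem_evenFrequencies.2 ⟨0, o, ho, by simp⟩

lemma two_mem_evenFrequencies : (2 : ℝ) ∈ evenFrequencies := by
  simpa using two_mul_mem_evenFrequencies isIntegral_one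

-- If `1 = k(1 + √2) + 2o`, then `1/2` or `√2/2` is integral according to the parity of `k`.
lemma one_notMem_evenFrequencies : (1 : ℝ) ∉ evenFrequencies := by
  rw [mem_evenFrequencies]
  rintro ⟨k, o, ho, h⟩
  have hsqrt : IsIntegral ℤ √2 := by simpa using isIntegral_sqrt_natCast 2
  have hint (j : ℤ) : IsIntegral ℤ (j * (1 + √2) + o) :=
    ((isIntegral_intCast j).mul (isIntegral_one.add hsqrt)).add ho
  rcases Int.even_or_odd' k with ⟨j, rfl | rfl⟩ <;> push_cast at h
  · exact not_isIntegral_one_half (by convert hint j using 1; linarith)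
  · have hhalf : (j * (1 + √2) + o) ^ 2 = 1 / 2 := by
      rw [show j * (1 + √2) + o = -(√2 / 2) by linarith, neg_sq, div_pow, sq_sqrt zero_le_two]
      norm_num
    exact not_isIntegral_one_half (hhalf ▸ (hint j).pow 2)

lemma isIntegral_sqrt_four_mul_add_one_sub_one_div_two (j : ℕ) :
    IsIntegral ℤ ((√((4 * j + 1 : ℕ) : ℝ) - 1) / 2) := by
  have hsq : √((4 * j + 1 : ℕ) : ℝ) ^ 2 = 4 * j + 1 := by
    rw [sq_sqrt (Nat.cast_nonneg _)]
    push_cast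
    rfl
  refine ⟨Polynomial.X ^ 2 + Polynomial.X - Polynomial.C (j : ℤ), by monicity!, ?_⟩
  simp only [Polynomial.eval₂_sub, Polynomial.eval₂_add, Polynomial.eval₂_pow, Polynomial.eval₂_X,
    Polynomial.eval₂_natCast, map_natCast]
  linear_combination hsq / 4

lemma sqrt_sub_one_mem_evenFrequencies {n : ℕ} (h : n % 4 = 1 ∨ n % 8 = 2) :
    √(n : ℝ) - 1 ∈ evenFrequencies := by
  rcases h with h | h
  · convert two_mul_mem_evenFrequencies
      (isIntegral_sqrt_four_mul_add_one_sub_one_div_two (n / 4)) using 1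
    rw [show 4 * (n / 4) + 1 = n by omega]
    ring
  · have ho := isIntegral_sqrt_four_mul_add_one_sub_one_div_two (n / 8)
    have hsqrt : IsIntegral ℤ √2 := by simpa using isIntegral_sqrt_natCast 2
    refine mem_evenFrequencies.2 ⟨1, _, (hsqrt.mul ho).sub isIntegral_one, ?_⟩
    have hn : (n : ℝ) = 2 * (4 * (n / 8) + 1 : ℕ) := by
      exact_mod_cast show n = 2 * (4 * (n / 8) + 1) by omega
    rw [hn, sqrt_mul zero_le_two]
    push_cast
    ring

lemma sqrt_mem_evenFrequencies {n : ℕ} (h : 4 ∣ n) : √(n : ℝ) ∈ evenFrequencies := by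
  obtain ⟨m, rfl⟩ := h
  convert two_mul_mem_evenFrequencies (isIntegral_sqrt_natCast m) using 1
  rw [show ((4 * m : ℕ) : ℝ) = 2 ^ 2 * m by push_cast; ring, sqrt_mul (sq_nonneg _),
    sqrt_sq zero_le_two]

open Classical in
/-- The sign of a frequency: `1` on `evenFrequencies`, and `-1` elsewhere. -/
noncomputable def paritySign (x : ℝ) : ℝ := if x ∈ evenFrequencies then 1 else -1

lemma paritySign_mul_self (x : ℝ) : paritySign x * paritySign x = 1 := by
  unfold paritySign
  split_ifs <;> norm_num

lemma paritySign_mul_of_sub_mem {x y : ℝ} (h : x - y ∈ evenFrequencies) :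
    paritySign x * paritySign y = 1 := by
  have hxy := evenFrequencies.add_mem_cancel_left (y := y) h
  rw [sub_add_cancel] at hxy
  by_cases hy : y ∈ evenFrequencies <;> simp [paritySign, hxy, hy]

lemma paritySign_mul_of_sub_sub_one_mem {x y : ℝ}
    (hy : y ∈ evenFrequencies ∨ y - 1 ∈ evenFrequencies) (h : x - y - 1 ∈ evenFrequencies) :
    paritySign x * paritySign y = -1 := by
  rcases hy with hy | hy
  · have hx : x ∉ evenFrequencies := fun hx => one_notMem_evenFrequencies <| by
      convert sub_mem (sub_mem hx hy) h using 1
      ring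
    simp [paritySign, hx, hy]
  · have hx : x ∈ evenFrequencies := by
      convert add_mem (add_mem h hy) two_mem_evenFrequencies using 1
      ring
    have hy' : y ∉ evenFrequencies := fun hy' => one_notMem_evenFrequencies <| by
      convert sub_mem hy' hy using 1
      ring
    simp [paritySign, hx, hy']

lemma mem_evenFrequencies_or_of_mem_subsetSum {A : Finset ℝ}
    (hA : ∀ s ∈ A, s - 1 ∈ evenFrequencies) {x : ℝ} (hx : x ∈ A.subsetSum) :
    x ∈ evenFrequencies ∨ x - 1 ∈ evenFrequencies := by
  obtain ⟨T, hT, rfl⟩ := mem_subsetSum_iff.1 hx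
  induction T using Finset.induction_on with
  | empty => exact .inl (by simp)
  | insert a T ha ih =>
    rw [sum_insert ha]
    have haH := hA a (hT (mem_insert_self a T))
    have hTA := (subset_insert a T).trans hT
    rcases ih hTA (mem_subsetSum_iff.2 ⟨T, hTA, rfl⟩) with h | h
    · exact .inr (by convert add_mem haH h using 1; ring)
    · exact .inl (by convert add_mem (add_mem haH h) two_mem_evenFrequencies using 1; ring)

/-! ### Differences of subset sums -/

variable {R : Type*} [CommRing R] [DecidableEq R]

lemma card_filter_sub_sq_le [NoZeroDivisors R] (L : Finset R) (d : R) :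
    #{p ∈ L ×ˢ L | (p.1 - p.2) ^ 2 = d ^ 2} ≤ 2 * #L := by
  have hsubset : {p ∈ L ×ˢ L | (p.1 - p.2) ^ 2 = d ^ 2} ⊆
      L.image (fun y => (y + d, y)) ∪ L.image (fun y => (y - d, y)) := by
    rintro ⟨x, y⟩ hp
    simp only [mem_filter, mem_product, sq_eq_sq_iff_eq_or_eq_neg] at hp
    obtain ⟨⟨-, hy⟩, h | h⟩ := hp
    · exact mem_union_left _ (mem_image.2 ⟨y, hy, by rw [← h, add_sub_cancel]⟩)
    · exact mem_union_right _ (mem_image.2 ⟨y, hy, by rw [sub_eq_add_neg, ← h, add_sub_cancel]⟩)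
  rw [two_mul]
  exact (card_le_card hsubset).trans
    ((card_union_le _ _).trans (add_le_add card_image_le card_image_le))

lemma exists_mem_subsetSum_sub_sq_eq {A : Finset R} {s : R} (hs : s ∈ A) {x : R}
    (hx : x ∈ A.subsetSum) : ∃ y ∈ A.subsetSum, (x - y) ^ 2 = s ^ 2 := by
  obtain ⟨T, hT, rfl⟩ := mem_subsetSum_iff.1 hx
  by_cases hsT : s ∈ T
  · refine ⟨∑ b ∈ T.erase s, b, mem_subsetSum_iff.2 ⟨_, (erase_subset s T).trans hT, rfl⟩, ?_⟩
    rw [← sum_erase_add T _ hsT, add_sub_cancel_left]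
  · refine ⟨∑ b ∈ insert s T, b, mem_subsetSum_iff.2 ⟨_, insert_subset hs hT, rfl⟩, ?_⟩
    rw [sum_insert hsT, sub_add_cancel_right, neg_sq]

lemma card_subsetSum_le_card_filter {A : Finset R} {s : R} (hs : s ∈ A) :
    #A.subsetSum ≤ #{p ∈ A.subsetSum ×ˢ A.subsetSum | (p.1 - p.2) ^ 2 = s ^ 2} := by
  refine card_le_card_of_surjOn Prod.fst fun x hx => ?_
  obtain ⟨y, hy, hxy⟩ := exists_mem_subsetSum_sub_sq_eq hs hx
  exact ⟨(x, y), by simpa using ⟨⟨hx, hy⟩, hxy⟩, rfl⟩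

end

section

open Set Filter Topology

/-! ### Unboundedness of the Riesz mean error -/

/-- The weight `e^{-η|v|²} / |v|²`, a convergence factor for the divergent series `∑ 1 / |v|²`; it
vanishes at the origin by the convention `1 / 0 = 0`. -/
noncomputable def gaussianWeight (η : ℝ) (v : ℤ × ℤ) : ℝ := exp (-η * normSq v) / normSq v

lemma gaussianWeight_nonneg (η : ℝ) (v : ℤ × ℤ) : 0 ≤ gaussianWeight η v :=
  div_nonneg (exp_nonneg _) (Nat.cast_nonneg _)

lemma summable_gaussianWeight {η : ℝ} (hη : 0 < η) : Summable (gaussianWeight η) := by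
  refine .of_nonneg_of_le (gaussianWeight_nonneg η) (fun v => ?_)
    ((summable_one_div_one_add_normSq_pow le_rfl).mul_left (4 / η))
  rcases Nat.eq_zero_or_pos (normSq v) with h | h
  · simp only [gaussianWeight, h, Nat.cast_zero, div_zero]
    positivity
  have hn : (1 : ℝ) ≤ normSq v := by exact_mod_cast h
  set n : ℝ := (normSq v : ℝ)
  have hexp : exp (-η * n) ≤ 1 / (η * n) := by
    rw [neg_mul, exp_neg, ← one_div]
    exact one_div_le_one_div_of_le (by positivity) (by linarith [add_one_le_exp (η * n)])
  calc gaussianWeight η v ≤ 1 / (η * n) / n := by unfold gaussianWeight; gcongr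
    _ = 4 / η * (1 / (2 * n) ^ 2) := by field_simp; norm_num
    _ ≤ 4 / η * (1 / (1 + n) ^ 2) := by gcongr; linarith

/-- The sum of `χ(x) χ(y)` over the pairs in `L` at distance `|v|`, with `χ` the parity sign. -/
noncomputable def signedPairCount (L : Finset ℝ) (v : ℤ × ℤ) : ℝ :=
  ∑ p ∈ L ×ˢ L with (p.1 - p.2) ^ 2 = (normSq v : ℝ), paritySign p.1 * paritySign p.2

lemma hasSum_exp_mul_shellSum (η l : ℝ) :
    HasSum (fun v => if l ^ 2 = (normSq v : ℝ) then gaussianWeight η v else 0)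
      (exp (-η * l ^ 2) * shellSum l) := by
  have hfinite : {v : ℤ × ℤ | (normSq v : ℝ) = l ^ 2}.Finite :=
    (finite_setOf_normSq_lt (l ^ 2 + 1)).subset fun v (hv : _ = _) =>
      show (normSq v : ℝ) < _ by rw [hv]; exact lt_add_one _
  have hsummable :
      Summable fun v : ℤ × ℤ => if (normSq v : ℝ) = l ^ 2 then 1 / (normSq v : ℝ) else 0 :=
    summable_of_hasFiniteSupport <| hfinite.subset fun v hv => by
      by_contra h
      exact hv (if_neg h)
  refine (hsummable.hasSum.mul_left (exp (-η * l ^ 2))).congr_fun fun v => ?_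
  by_cases h : l ^ 2 = (normSq v : ℝ)
  · simp only [gaussianWeight, h, if_true, mul_one_div]
  · simp only [if_neg h, if_neg (Ne.symm h), mul_zero]

lemma hasSum_gaussianWeight_mul_signedPairCount (η : ℝ) (L : Finset ℝ) :
    HasSum (fun v => gaussianWeight η v * signedPairCount L v)
      (∑ p ∈ L ×ˢ L, paritySign p.1 * paritySign p.2 * exp (-η * (p.1 - p.2) ^ 2) *
        shellSum (p.1 - p.2)) := by
  have h := hasSum_sum fun p (_ : p ∈ L ×ˢ L) =>
    (hasSum_exp_mul_shellSum η (p.1 - p.2)).mul_left (paritySign p.1 * paritySign p.2)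
  simp only [← mul_assoc] at h
  refine h.congr_fun fun v => ?_
  rw [signedPairCount, Finset.mul_sum, Finset.sum_filter]
  exact Finset.sum_congr rfl fun p _ => by split_ifs <;> ring

lemma neg_tsum_mul_signedPairCount_le {C t₀ η : ℝ} (hC : ∀ t, t₀ < t → rieszError t ≤ C * t)
    (hη : 0 ≤ η) (L : Finset ℝ) :
    -∑' v, gaussianWeight η v * signedPairCount L v ≤ 4 * π * C * L.card := by
  have h := sum_mul_boundary_value_nonneg hC (L ×ˢ L)
    (fun p => paritySign p.1 * paritySign p.2 * exp (-η * (p.1 - p.2) ^ 2)) (fun p => p.1 - p.2)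
    (fun t => by simpa only [mul_right_comm _ _ t] using
      sum_gaussian_mul_cos_nonneg L paritySign hη (2 * π * t))
  have hdiag : ∑ p ∈ L ×ˢ L, paritySign p.1 * paritySign p.2 * exp (-η * (p.1 - p.2) ^ 2) *
      (C * if p.1 - p.2 = 0 then 2 else 0) = 2 * C * L.card := by
    simp [Finset.sum_product, sub_eq_zero, paritySign_mul_self]
    ring
  simp only [mul_add, Finset.sum_add_distrib, hdiag, mul_div_assoc', ← Finset.sum_div,
    ← (hasSum_gaussianWeight_mul_signedPairCount η L).tsum_eq] at h
  have := mul_nonneg two_pi_pos.le h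
  rw [mul_add, mul_div_cancel₀ _ two_pi_pos.ne'] at this
  linarith

lemma sq_mod_eight (a : ℕ) :
    a % 2 = 0 ∧ (a ^ 2 % 8 = 0 ∨ a ^ 2 % 8 = 4) ∨ a % 2 = 1 ∧ a ^ 2 % 8 = 1 := by
  have ha : a % 2 = a % 8 % 2 := by omega
  have : a % 8 < 8 := Nat.mod_lt _ (by norm_num)
  rw [Nat.pow_mod, ha]
  interval_cases a % 8 <;> simp

lemma normSq_mod_of_not_four_dvd {v : ℤ × ℤ} (hv : ¬ 4 ∣ normSq v) :
    normSq v % 4 = 1 ∨ normSq v % 8 = 2 := by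
  unfold normSq at *
  have := sq_mod_eight v.1.natAbs
  have := sq_mod_eight v.2.natAbs
  omega

/-- The points of `ℤ²` with `4 ∣ |v|²`, which are the points of `2ℤ²`. -/
def evenPoints : Set (ℤ × ℤ) := {v | 4 ∣ normSq v}

lemma normSq_two_nsmul (u : ℤ × ℤ) : normSq (2 • u) = 4 * normSq u := by
  simp only [normSq, Prod.smul_fst, Prod.smul_snd]
  simp only [nsmul_eq_mul, Int.natAbs_mul, Nat.cast_ofNat, Int.reduceAbs]
  ring

lemma range_two_nsmul : Set.range (fun u : ℤ × ℤ => 2 • u) = evenPoints := by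
  refine Set.Subset.antisymm ?_ fun v (hv : 4 ∣ normSq v) => ?_
  · rintro _ ⟨u, rfl⟩
    exact ⟨normSq u, normSq_two_nsmul u⟩
  · unfold normSq at hv
    have := sq_mod_eight v.1.natAbs
    have := sq_mod_eight v.2.natAbs
    refine ⟨(v.1 / 2, v.2 / 2), ?_⟩
    dsimp only
    rw [Prod.smul_mk, nsmul_eq_mul, nsmul_eq_mul]
    ext <;> dsimp only <;> omega

lemma gaussianWeight_two_nsmul_le {η : ℝ} (hη : 0 ≤ η) (u : ℤ × ℤ) :
    gaussianWeight η (2 • u) ≤ gaussianWeight η u / 4 := by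
  simp only [gaussianWeight, normSq_two_nsmul, Nat.cast_mul, Nat.cast_ofNat]
  rw [div_div, mul_comm (normSq u : ℝ)]
  gcongr ?_ / _
  exact exp_le_exp.2 (by nlinarith [mul_nonneg hη (Nat.cast_nonneg (α := ℝ) (normSq u))])

lemma tsum_evenPoints_gaussianWeight_le {η : ℝ} (hη : 0 < η) :
    ∑' v, evenPoints.indicator (gaussianWeight η) v ≤ (∑' v, gaussianWeight η v) / 4 := by
  have hinj : Function.Injective fun u : ℤ × ℤ => 2 • u := nsmul_right_injective two_ne_zero
  rw [← range_two_nsmul, ← tsum_subtype, tsum_range _ hinj, ← tsum_div_const]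
  exact ((summable_gaussianWeight hη).comp_injective hinj).tsum_le_tsum
    (gaussianWeight_two_nsmul_le hη.le) ((summable_gaussianWeight hη).div_const 4)

lemma sub_mem_of_sq_eq {x y d : ℝ} (hd : d ∈ evenFrequencies) (h : (x - y) ^ 2 = d ^ 2) :
    x - y ∈ evenFrequencies := by
  rcases sq_eq_sq_iff_eq_or_eq_neg.1 h with h | h <;> rw [h]
  exacts [hd, neg_mem hd]

lemma sub_sub_one_mem_of_sq_eq {x y d : ℝ} (hd : d - 1 ∈ evenFrequencies)
    (h : (x - y) ^ 2 = d ^ 2) : x - y - 1 ∈ evenFrequencies := by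
  rcases sq_eq_sq_iff_eq_or_eq_neg.1 h with h | h <;> rw [h]
  · exact hd
  · convert neg_mem (add_mem hd two_mem_evenFrequencies) using 1
    ring

lemma signedPairCount_le_of_four_dvd (L : Finset ℝ) {v : ℤ × ℤ} (hv : v ∈ evenPoints) :
    signedPairCount L v ≤ 2 * L.card := by
  have hn : √(normSq v : ℝ) ^ 2 = normSq v := sq_sqrt (Nat.cast_nonneg _)
  have hcount := card_filter_sub_sq_le L √(normSq v)
  have hsign : ∀ p ∈ {p ∈ L ×ˢ L | (p.1 - p.2) ^ 2 = (normSq v : ℝ)},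
      paritySign p.1 * paritySign p.2 = 1 := fun p hp =>
    paritySign_mul_of_sub_mem <| sub_mem_of_sq_eq (sqrt_mem_evenFrequencies hv) <|
      (Finset.mem_filter.1 hp).2.trans hn.symm
  rw [hn] at hcount
  rw [signedPairCount, Finset.sum_congr rfl hsign, Finset.sum_const, nsmul_one]
  exact_mod_cast hcount

lemma signedPairCount_subsetSum_eq {A : Finset ℝ} (hA : ∀ s ∈ A, s - 1 ∈ evenFrequencies)
    {v : ℤ × ℤ} (hv : v ∉ evenPoints) : signedPairCount A.subsetSum v =
      -({p ∈ A.subsetSum ×ˢ A.subsetSum | (p.1 - p.2) ^ 2 = (normSq v : ℝ)}.card : ℝ) := by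
  have hn : √(normSq v : ℝ) ^ 2 = normSq v := sq_sqrt (Nat.cast_nonneg _)
  have hsign : ∀ p ∈ {p ∈ A.subsetSum ×ˢ A.subsetSum | (p.1 - p.2) ^ 2 = (normSq v : ℝ)},
      paritySign p.1 * paritySign p.2 = -1 := fun p hp => by
    obtain ⟨hpA, hpv⟩ := Finset.mem_filter.1 hp
    exact paritySign_mul_of_sub_sub_one_mem
      (mem_evenFrequencies_or_of_mem_subsetSum hA (Finset.mem_product.1 hpA).2)
      (sub_sub_one_mem_of_sq_eq
        (sqrt_sub_one_mem_evenFrequencies (normSq_mod_of_not_four_dvd hv)) (hpv.trans hn.symm))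
  rw [signedPairCount, Finset.sum_congr rfl hsign, Finset.sum_const, smul_neg, nsmul_one]

lemma gaussianWeight_mul_signedPairCount_le (η : ℝ) {V : Finset (ℤ × ℤ)}
    (hV : ∀ v ∈ V, v ∉ evenPoints) {L : Finset ℝ}
    (hL : L = (V.image fun v => √(normSq v : ℝ)).subsetSum) (v : ℤ × ℤ) :
    gaussianWeight η v * signedPairCount L v ≤
      L.card * (2 * evenPoints.indicator (gaussianWeight η) v -
        (V : Set (ℤ × ℤ)).indicator (gaussianWeight η) v) := by
  have hA : ∀ s ∈ V.image fun v => √(normSq v : ℝ), s - 1 ∈ evenFrequencies := by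
    simp only [Finset.mem_image, forall_exists_index, and_imp]
    rintro _ v hv rfl
    exact sqrt_sub_one_mem_evenFrequencies (normSq_mod_of_not_four_dvd (hV v hv))
  have hw := gaussianWeight_nonneg η v
  by_cases hv : v ∈ evenPoints
  · rw [indicator_of_mem hv, indicator_of_notMem fun h => hV v h hv]
    linarith [mul_le_mul_of_nonneg_left (signedPairCount_le_of_four_dvd L hv) hw]
  subst hL
  rw [indicator_of_notMem hv, signedPairCount_subsetSum_eq hA hv]
  by_cases hvV : v ∈ V
  · have hcard := card_subsetSum_le_card_filter
      (Finset.mem_image_of_mem (fun v => √(normSq v : ℝ)) hvV)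
    rw [sq_sqrt (Nat.cast_nonneg _)] at hcard
    rw [indicator_of_mem (Finset.mem_coe.2 hvV)]
    linarith [mul_le_mul_of_nonneg_left (Nat.cast_le (α := ℝ).2 hcard) hw]
  · rw [indicator_of_notMem (mt Finset.mem_coe.1 hvV), mul_zero, sub_zero, mul_zero, mul_neg,
      neg_nonpos]
    exact mul_nonneg hw (Nat.cast_nonneg _)

-- With subset sums of the norms of `V` as frequencies, each point of `V` contributes negatively.
lemma sum_gaussianWeight_le {C t₀ η : ℝ} (hC : ∀ t, t₀ < t → rieszError t ≤ C * t) (hη : 0 < η)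
    {V : Finset (ℤ × ℤ)} (hV : ∀ v ∈ V, v ∉ evenPoints) :
    ∑ v ∈ V, gaussianWeight η v ≤
      4 * π * C + 2 * ∑' v, evenPoints.indicator (gaussianWeight η) v := by
  obtain ⟨L, hL⟩ : ∃ L, L = (V.image fun v => √(normSq v : ℝ)).subsetSum := ⟨_, rfl⟩
  have hLpos : (0 : ℝ) < L.card := by
    rw [hL]
    exact_mod_cast Finset.subsetSum_nonempty.card_pos
  have hbound := ((((summable_gaussianWeight hη).indicator evenPoints).hasSum.mul_left 2).sub
    (hasSum_subtype_iff_indicator.1 (V.hasSum (gaussianWeight η)))).mul_left (L.card : ℝ)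
  have hle := hasSum_le (gaussianWeight_mul_signedPairCount_le η hV hL)
    (hasSum_gaussianWeight_mul_signedPairCount η L).summable.hasSum hbound
  have hneg := neg_tsum_mul_signedPairCount_le hC hη.le L
  nlinarith

lemma tsum_gaussianWeight_le {C t₀ η : ℝ} (hC : ∀ t, t₀ < t → rieszError t ≤ C * t)
    (hη : 0 < η) : ∑' v, gaussianWeight η v ≤ 16 * π * C := by
  classical
  have hw := summable_gaussianWeight hη
  have hodd : ∑' v, evenPointsᶜ.indicator (gaussianWeight η) v ≤
      4 * π * C + 2 * ∑' v, evenPoints.indicator (gaussianWeight η) v := by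
    refine Real.tsum_le_of_sum_le (indicator_nonneg fun v _ => gaussianWeight_nonneg η v)
      fun u => ?_
    rw [Finset.sum_indicator_eq_sum_filter]
    exact sum_gaussianWeight_le hC hη fun v hv => (Finset.mem_filter.1 hv).2
  have hsplit := (hw.indicator evenPoints).tsum_add (hw.indicator evenPointsᶜ)
  simp only [indicator_self_add_compl_apply] at hsplit
  linarith [tsum_evenPoints_gaussianWeight_le hη]

theorem exists_lt_rieszError (C t₀ : ℝ) : ∃ t, t₀ < t ∧ C * t < rieszError t := by
  by_contra! hC
  refine not_summable_one_div_normSq (summable_of_sum_le (c := 16 * π * C)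
    (fun v => by positivity) fun u => ?_)
  have hlim : Tendsto (fun η => ∑ v ∈ u, gaussianWeight η v) (𝓝[>] 0)
      (𝓝 (∑ v ∈ u, 1 / (normSq v : ℝ))) := by
    have hcont : Continuous fun η => ∑ v ∈ u, gaussianWeight η v := by
      unfold gaussianWeight
      fun_prop
    simpa [gaussianWeight] using (hcont.tendsto 0).mono_left nhdsWithin_le_nhds
  refine le_of_tendsto hlim ?_
  filter_upwards [self_mem_nhdsWithin] with η (hη : 0 < η)
  exact ((summable_gaussianWeight hη).sum_le_tsum u fun v _ => gaussianWeight_nonneg η v).trans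
    (tsum_gaussianWeight_le hC hη)

end

/-- limsup_{x→∞} E(x)/x^{1/2} = +∞: for every real `C` there exist arbitrarily
large `x` with `E(x) > C·x^{1/2}`. -/
theorem limsup_E_eq_top :
    ∀ C : ℝ, ∀ X : ℝ, ∃ x : ℝ, X < x ∧ C * x ^ ((1 : ℝ) / 2) < E x := by
  intro C X
  obtain ⟨t, ht, hCt⟩ := exists_lt_rieszError (|C| + 23) (1 + |X|)
  have ht1 : 1 ≤ t := by linarith [abs_nonneg X]
  have hXt : X < t ^ 4 := calc
    X < t := by linarith [le_abs_self X]
    _ ≤ t ^ 4 := le_self_pow₀ ht1 four_ne_zero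
  have hroot : (t ^ 4) ^ ((1 : ℝ) / 2) = t ^ 2 := by
    rw [← sqrt_eq_rpow, show t ^ 4 = (t ^ 2) ^ 2 by ring, sqrt_sq (sq_nonneg t)]
  have hpos : 0 ≤ (|C| + 23) * t := by positivity
  refine ⟨t ^ 4, hXt, ?_⟩
  rw [hroot]
  calc C * t ^ 2 ≤ (|C| + 23) * t * t - 23 * t ^ 2 := by
        nlinarith [mul_le_mul_of_nonneg_right (le_abs_self C) (sq_nonneg t)]
    _ < rieszError t * t - 23 * t ^ 2 := by gcongr
    _ ≤ 2 * √2 * t * rieszError t - 23 * t ^ 2 := by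
        nlinarith [one_le_sqrt.2 (one_le_two (α := ℝ)),
          mul_nonneg (hpos.trans hCt.le) (zero_le_one.trans ht1)]
    _ ≤ E (t ^ 4) := rieszError_sub_le_E ht1
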